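/- (Theorem 22) Let 0 < θ₀ < 1, 0 < θ ≤ 1, 0 < q₀, r, r₀ ≤ ∞, a, a₀, b₀ ∈ SV, and ‖s^{-1/r₀} b₀(s)/a₀(s)‖_{r₀,(0,1)} < ∞; if θ = 1 assume additionally ‖s^{-1/r} a(s)‖_{r,(0,1)} < ∞. Put c₀(t) = a₀(t) ‖s^{-1/r₀} b₀(s)/a₀(s)‖_{r₀,(0,t)} and ρ(t) = t^{1-θ₀} c₀(t). Then (Ā^𝓡_{θ₀,r₀,b₀,q₀,a₀}, A₁)_{θ,r;a} ≅ Ā_{η,r;a^#}, where η = (1-θ)θ₀ + θ and a^#(t) = c₀(t)^{1-θ} a(ρ(t)). -/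

import Mathlib

open MeasureTheory Set ENNReal Filter

noncomputable section

/-- The `L_q` quasi-norm (with respect to Lebesgue measure) of an `ℝ≥0∞`-valued
function over a set of reals; for `q = ∞` it is the essential supremum. -/
def LqNorm (q : ℝ≥0∞) (s : Set ℝ) (g : ℝ → ℝ≥0∞) : ℝ≥0∞ :=
  if q = ∞ then essSup g (volume.restrict s)
  else (∫⁻ t in s, g t ^ q.toReal) ^ q⁻¹.toReal

/-- The weight `s ↦ s ^ (-1/r) * b s`, as an `ℝ≥0∞`-valued function
(`1/∞ = 0` by convention). -/
def svWgt (r : ℝ≥0∞) (b : ℝ → ℝ) : ℝ → ℝ≥0∞ :=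
  fun s => ENNReal.ofReal (s ^ (-(r⁻¹.toReal)) * b s)

/-- `f` and `g` are equivalent on `s`: each is bounded by a constant multiple
of the other there. -/
def EquivOn (s : Set ℝ) (f g : ℝ → ℝ) : Prop :=
  ∃ C : ℝ, 0 < C ∧ ∀ t ∈ s, C⁻¹ * g t ≤ f t ∧ f t ≤ C * g t

/-- A positive measurable function `b` on `(0,∞)` is slowly varying if for every
`ε > 0`, `t ^ ε * b t` is equivalent to a non-decreasing function and
`t ^ (-ε) * b t` is equivalent to a non-increasing function. -/
def SlowlyVarying (b : ℝ → ℝ) : Prop :=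
  AEMeasurable b (volume.restrict (Ioi 0)) ∧ (∀ t ∈ Ioi (0:ℝ), 0 < b t) ∧
    ∀ ε : ℝ, 0 < ε →
      (∃ g : ℝ → ℝ, MonotoneOn g (Ioi 0) ∧ EquivOn (Ioi 0) (fun t => t ^ ε * b t) g) ∧
      (∃ g : ℝ → ℝ, AntitoneOn g (Ioi 0) ∧ EquivOn (Ioi 0) (fun t => t ^ (-ε) * b t) g)

/-- A quasi-Banach space continuously embedded into the ambient (Hausdorff) space `E`,
recorded via its extended-real-valued quasi-norm; the space itself is the set of
vectors of finite quasi-norm. -/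
structure QuasiBanach (E : Type*) [AddCommGroup E] [Module ℝ E] where
  N : E → ℝ≥0∞
  zero : N 0 = 0
  definite : ∀ x, N x = 0 → x = 0
  smul : ∀ (c : ℝ) (x : E), N (c • x) = ENNReal.ofReal |c| * N x
  quasi : ∃ C : ℝ≥0∞, 1 ≤ C ∧ C ≠ ∞ ∧ ∀ x y, N (x + y) ≤ C * (N x + N y)
  complete : ∀ f : ℕ → E,
    (∀ ε : ℝ≥0∞, 0 < ε → ∃ M : ℕ, ∀ m ≥ M, ∀ n ≥ M, N (f m - f n) < ε) →
    (∀ n, N (f n) ≠ ∞) →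
    ∃ g : E, N g ≠ ∞ ∧ Tendsto (fun n => N (f n - g)) atTop (nhds 0)

variable {E : Type*} [AddCommGroup E] [Module ℝ E]

/-- The Peetre K-functional of the couple whose quasi-norms are `N₀`, `N₁`. -/
def Kf (N₀ N₁ : E → ℝ≥0∞) (t : ℝ) (f : E) : ℝ≥0∞ :=
  ⨅ g : E, N₀ g + ENNReal.ofReal t * N₁ (f - g)

/-- The quasi-norm of the real interpolation space `Ā_{θ,q;b}`. -/
def normK (N₀ N₁ : E → ℝ≥0∞) (θ : ℝ) (q : ℝ≥0∞) (b : ℝ → ℝ) (f : E) : ℝ≥0∞ :=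
  LqNorm q (Ioi 0) fun u =>
    ENNReal.ofReal (u ^ (-θ - q⁻¹.toReal) * b u) * Kf N₀ N₁ u f

/-- The quasi-norm of the limiting interpolation space `Ā^𝓛_{σ,r,b,q,a}`. -/
def normL (N₀ N₁ : E → ℝ≥0∞) (σ : ℝ) (r q : ℝ≥0∞) (b a : ℝ → ℝ) (f : E) : ℝ≥0∞ :=
  LqNorm r (Ioi 0) fun t =>
    ENNReal.ofReal (t ^ (-(r⁻¹.toReal)) * (b t / a t)) *
      LqNorm q (Ioo 0 t) fun u =>
        ENNReal.ofReal (u ^ (-σ - q⁻¹.toReal) * a u) * Kf N₀ N₁ u f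

/-- The quasi-norm of the limiting interpolation space `Ā^𝓡_{σ,r,b,q,a}`. -/
def normR (N₀ N₁ : E → ℝ≥0∞) (σ : ℝ) (r q : ℝ≥0∞) (b a : ℝ → ℝ) (f : E) : ℝ≥0∞ :=
  LqNorm r (Ioi 0) fun t =>
    ENNReal.ofReal (t ^ (-(r⁻¹.toReal)) * (b t / a t)) *
      LqNorm q (Ioi t) fun u =>
        ENNReal.ofReal (u ^ (-σ - q⁻¹.toReal) * a u) * Kf N₀ N₁ u f

/-- Two (extended-real-valued) quasi-norms define the same space with
equivalent quasi-norms. -/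
def EquivNorms (nX nY : E → ℝ≥0∞) : Prop :=
  ∃ C : ℝ≥0∞, 0 < C ∧ C ≠ ∞ ∧ ∀ f : E, C⁻¹ * nY f ≤ nX f ∧ nX f ≤ C * nY f

open scoped NNReal

/-- Logarithmic form of slow variation. -/
def LSV (b : ℝ → ℝ) : Prop :=
  (∀ t, 0 < t → 0 < b t) ∧ ∀ ε : ℝ, 0 < ε → ∃ C : ℝ, 0 ≤ C ∧ ∀ s t : ℝ, 0 < s → 0 < t →
    Real.log (b s) - Real.log (b t) ≤ C + ε * |Real.log s - Real.log t|

lemma log_sub_le_of_le {x y C s t ε : ℝ} (hx : 0 < x) (hy : 0 < y) (hs : 0 < s) (ht : 0 < t)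
    (hC : 0 < C) (h : x ≤ C * (t / s) ^ ε * y) :
    Real.log x - Real.log y ≤ Real.log C + ε * (Real.log t - Real.log s) := by
  have h1 := Real.log_le_log hx h
  have hts : 0 < t / s := div_pos ht hs
  have hp : 0 < (t / s) ^ ε := Real.rpow_pos_of_pos hts _
  rw [Real.log_mul (by positivity) hy.ne', Real.log_mul hC.ne' hp.ne', Real.log_rpow hts,
    Real.log_div ht.ne' hs.ne'] at h1
  linarith

lemma LSV.of_bound {b : ℝ → ℝ} (hb : ∀ t, 0 < t → 0 < b t)
    (h : ∀ ε : ℝ, 0 < ε → ∃ C : ℝ, 0 < C ∧ ∀ s t : ℝ, 0 < s → s ≤ t →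
      b s ≤ C * (t / s) ^ ε * b t ∧ b t ≤ C * (t / s) ^ ε * b s) : LSV b := by
  refine ⟨hb, fun ε hε => ?_⟩
  obtain ⟨C, hC, h⟩ := h ε hε
  refine ⟨|Real.log C|, abs_nonneg _, fun s t hs ht => ?_⟩
  have hl := le_abs_self (Real.log C)
  rcases le_total s t with hst | hst
  · have := log_sub_le_of_le (hb s hs) (hb t ht) hs ht hC (h s t hs hst).1
    have h2 : Real.log t - Real.log s ≤ |Real.log s - Real.log t| := by
      rw [abs_sub_comm]; exact le_abs_self _
    nlinarith
  · have := log_sub_le_of_le (hb s hs) (hb t ht) ht hs hC (h t s ht hst).2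
    have h2 : Real.log s - Real.log t ≤ |Real.log s - Real.log t| := le_abs_self _
    nlinarith

lemma LSV.bound {b : ℝ → ℝ} (hb : LSV b) {ε : ℝ} (hε : 0 < ε) :
    ∃ C : ℝ, 0 < C ∧ ∀ s t : ℝ, 0 < s → s ≤ t →
      b s ≤ C * (t / s) ^ ε * b t ∧ b t ≤ C * (t / s) ^ ε * b s := by
  obtain ⟨C, hC, h⟩ := hb.2 ε hε
  refine ⟨Real.exp C, Real.exp_pos _, fun s t hs hst => ?_⟩
  have ht : 0 < t := hs.trans_le hst
  have hl : Real.log s ≤ Real.log t := Real.log_le_log hs hst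
  have e1 : |Real.log s - Real.log t| = Real.log t - Real.log s := by
    rw [abs_sub_comm, abs_of_nonneg (by linarith)]
  have hts : 0 < t / s := div_pos ht hs
  have hp : 0 < (t / s) ^ ε := Real.rpow_pos_of_pos hts _
  have bs := hb.1 s hs
  have bt := hb.1 t ht
  constructor
  · rw [← Real.log_le_log_iff bs (by positivity), Real.log_mul (by positivity) bt.ne',
      Real.log_mul (Real.exp_pos _).ne' hp.ne', Real.log_rpow hts, Real.log_exp,
      Real.log_div ht.ne' hs.ne']
    have := h s t hs ht
    rw [e1] at this; linarith
  · rw [← Real.log_le_log_iff bt (by positivity), Real.log_mul (by positivity) bs.ne',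
      Real.log_mul (Real.exp_pos _).ne' hp.ne', Real.log_rpow hts, Real.log_exp,
      Real.log_div ht.ne' hs.ne']
    have := h t s ht hs
    rw [abs_sub_comm, e1] at this; linarith

lemma SlowlyVarying.lsv {b : ℝ → ℝ} (hb : SlowlyVarying b) : LSV b := by
  obtain ⟨-, hpos, h⟩ := hb
  refine LSV.of_bound hpos fun ε hε => ?_
  obtain ⟨⟨g, hg, C, hC, hgC⟩, ⟨g', hg', C', hC', hgC'⟩⟩ := h ε hε
  refine ⟨C * C + C' * C', by positivity, fun s t hs hst => ?_⟩
  have ht : 0 < t := hs.trans_le hst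
  have bs := hpos s hs
  have bt := hpos t ht
  have hsp : 0 < s ^ ε := Real.rpow_pos_of_pos hs _
  have htp : 0 < t ^ ε := Real.rpow_pos_of_pos ht _
  rw [Real.div_rpow ht.le hs.le]
  constructor
  · have h1 := (hgC s hs).2
    have h2 := (hgC t ht).1
    have h3 := hg hs ht hst
    simp only at h1 h2
    rw [inv_mul_le_iff₀ hC] at h2
    have h4 : s ^ ε * b s ≤ C * (C * (t ^ ε * b t)) :=
      h1.trans (mul_le_mul_of_nonneg_left (h3.trans h2) hC.le)
    have h5 : b s ≤ C * C * (t ^ ε / s ^ ε) * b t := by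
      rw [show C * C * (t ^ ε / s ^ ε) * b t = (C * (C * (t ^ ε * b t))) / s ^ ε by ring,
        le_div_iff₀ hsp]
      linarith
    refine h5.trans ?_
    gcongr
    nlinarith
  · have h1 := (hgC' t ht).2
    have h2 := (hgC' s hs).1
    have h3 := hg' hs ht hst
    simp only at h1 h2
    rw [inv_mul_le_iff₀ hC'] at h2
    have h4 : t ^ (-ε) * b t ≤ C' * (C' * (s ^ (-ε) * b s)) :=
      h1.trans (mul_le_mul_of_nonneg_left (h3.trans h2) hC'.le)
    rw [Real.rpow_neg ht.le, Real.rpow_neg hs.le, inv_mul_le_iff₀ htp] at h4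
    have h5 : b t ≤ C' * C' * (t ^ ε / s ^ ε) * b s := by
      refine h4.trans (le_of_eq ?_)
      field_simp
    refine h5.trans ?_
    gcongr
    nlinarith

lemma LSV.mul {b c : ℝ → ℝ} (hb : LSV b) (hc : LSV c) : LSV (fun t => b t * c t) := by
  refine ⟨fun t ht => mul_pos (hb.1 t ht) (hc.1 t ht), fun ε hε => ?_⟩
  obtain ⟨C, hC, h⟩ := hb.2 (ε / 2) (by positivity)
  obtain ⟨C', hC', h'⟩ := hc.2 (ε / 2) (by positivity)
  refine ⟨C + C', by positivity, fun s t hs ht => ?_⟩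
  rw [Real.log_mul (hb.1 s hs).ne' (hc.1 s hs).ne', Real.log_mul (hb.1 t ht).ne' (hc.1 t ht).ne']
  have := h s t hs ht
  have := h' s t hs ht
  linarith

lemma LSV.rpow {b : ℝ → ℝ} (hb : LSV b) (p : ℝ) : LSV (fun t => b t ^ p) := by
  refine ⟨fun t ht => Real.rpow_pos_of_pos (hb.1 t ht) _, fun ε hε => ?_⟩
  obtain ⟨C, hC, h⟩ := hb.2 (ε / (|p| + 1)) (by positivity)
  refine ⟨|p| * C, by positivity, fun s t hs ht => ?_⟩
  rw [Real.log_rpow (hb.1 s hs), Real.log_rpow (hb.1 t ht)]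
  have h1 := h s t hs ht
  have h2 := h t s ht hs
  rw [abs_sub_comm (Real.log t)] at h2
  set D := |Real.log s - Real.log t|
  have hD : 0 ≤ D := abs_nonneg _
  have h3 : |Real.log (b s) - Real.log (b t)| ≤ C + ε / (|p| + 1) * D :=
    abs_le.2 ⟨by linarith, h1⟩
  calc p * Real.log (b s) - p * Real.log (b t) = p * (Real.log (b s) - Real.log (b t)) := by ring
    _ ≤ |p * (Real.log (b s) - Real.log (b t))| := le_abs_self _
    _ = |p| * |Real.log (b s) - Real.log (b t)| := abs_mul _ _
    _ ≤ |p| * (C + ε / (|p| + 1) * D) := by gcongr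
    _ = |p| * C + ε * D * (|p| / (|p| + 1)) := by ring
    _ ≤ |p| * C + ε * D * 1 := by
        gcongr
        rw [div_le_one (by positivity)]; linarith
    _ = _ := by ring

lemma LSV.inv {b : ℝ → ℝ} (hb : LSV b) : LSV (fun t => (b t)⁻¹) := by
  have := hb.rpow (-1)
  simpa only [Real.rpow_neg_one] using this

lemma LSV.div {b c : ℝ → ℝ} (hb : LSV b) (hc : LSV c) : LSV (fun t => b t / c t) := by
  simpa only [div_eq_mul_inv] using hb.mul hc.inv

lemma LSV.comp {a c : ℝ → ℝ} (ha : LSV a) (hc : LSV c) (p : ℝ) :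
    LSV (fun t => a (t ^ p * c t)) := by
  have hpos : ∀ t, 0 < t → 0 < t ^ p * c t := fun t ht =>
    mul_pos (Real.rpow_pos_of_pos ht _) (hc.1 t ht)
  refine ⟨fun t ht => ha.1 _ (hpos t ht), fun ε hε => ?_⟩
  obtain ⟨C, hC, h⟩ := ha.2 (ε / (|p| + 1)) (by positivity)
  obtain ⟨C', hC', h'⟩ := hc.2 1 one_pos
  refine ⟨C + ε / (|p| + 1) * C', by positivity, fun s t hs ht => ?_⟩
  refine (h _ _ (hpos s hs) (hpos t ht)).trans ?_
  rw [Real.log_mul (Real.rpow_pos_of_pos hs _).ne' (hc.1 s hs).ne',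
    Real.log_mul (Real.rpow_pos_of_pos ht _).ne' (hc.1 t ht).ne', Real.log_rpow hs,
    Real.log_rpow ht]
  have h1 := h' s t hs ht
  have h2 := h' t s ht hs
  rw [abs_sub_comm (Real.log t)] at h2
  set D := |Real.log s - Real.log t|
  have h3 : |Real.log (c s) - Real.log (c t)| ≤ C' + 1 * D :=
    abs_le.2 ⟨by linarith, h1⟩
  have h4 : |p * Real.log s + Real.log (c s) - (p * Real.log t + Real.log (c t))|
      ≤ |p| * D + (C' + 1 * D) := by
    rw [show p * Real.log s + Real.log (c s) - (p * Real.log t + Real.log (c t))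
      = p * (Real.log s - Real.log t) + (Real.log (c s) - Real.log (c t)) by ring]
    refine (abs_add_le _ _).trans ?_
    rw [abs_mul]
    gcongr
  calc _ ≤ C + ε / (|p| + 1) * (|p| * D + (C' + 1 * D)) := by gcongr
    _ = _ := by field_simp; ring

/-! ### `LqNorm` -/

lemma LqNorm_mono {q : ℝ≥0∞} {s : Set ℝ} (hs : MeasurableSet s) {f g : ℝ → ℝ≥0∞}
    (h : ∀ t ∈ s, f t ≤ g t) : LqNorm q s f ≤ LqNorm q s g := by
  unfold LqNorm
  split_ifs with hq
  · exact essSup_mono_ae ((ae_restrict_iff' hs).2 (Eventually.of_forall h))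
  · refine ENNReal.rpow_le_rpow ?_ ENNReal.toReal_nonneg
    exact setLIntegral_mono' hs fun t ht => ENNReal.rpow_le_rpow (h t ht) ENNReal.toReal_nonneg

lemma LqNorm_congr {q : ℝ≥0∞} {s : Set ℝ} (hs : MeasurableSet s) {f g : ℝ → ℝ≥0∞}
    (h : ∀ t ∈ s, f t = g t) : LqNorm q s f = LqNorm q s g :=
  le_antisymm (LqNorm_mono hs fun t ht => (h t ht).le) (LqNorm_mono hs fun t ht => (h t ht).ge)

lemma LqNorm_mono_set {q : ℝ≥0∞} {s t : Set ℝ} (h : s ⊆ t) (f : ℝ → ℝ≥0∞) :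
    LqNorm q s f ≤ LqNorm q t f := by
  unfold LqNorm
  split_ifs with hq
  · exact essSup_mono_measure' (Measure.restrict_mono_set _ h)
  · exact ENNReal.rpow_le_rpow (lintegral_mono_set h) ENNReal.toReal_nonneg

lemma toReal_pos_of {q : ℝ≥0∞} (hq : 0 < q) (hq' : q ≠ ∞) : 0 < q.toReal :=
  ENNReal.toReal_pos hq.ne' hq'

lemma rpow_mul_rpow_inv {q : ℝ≥0∞} (hq : 0 < q) (hq' : q ≠ ∞) (c X : ℝ≥0∞) :
    (c ^ q.toReal * X) ^ q⁻¹.toReal = c * X ^ q⁻¹.toReal := by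
  have := toReal_pos_of hq hq'
  rw [ENNReal.mul_rpow_of_nonneg _ _ ENNReal.toReal_nonneg, ← ENNReal.rpow_mul,
    ENNReal.toReal_inv, mul_inv_cancel₀ this.ne', ENNReal.rpow_one]

lemma LqNorm_const_mul {q : ℝ≥0∞} (hq : 0 < q) (s : Set ℝ) (c : ℝ≥0∞) (hc : c ≠ ∞)
    (f : ℝ → ℝ≥0∞) : LqNorm q s (fun t => c * f t) = c * LqNorm q s f := by
  unfold LqNorm
  split_ifs with hq'
  · exact ENNReal.essSup_const_mul
  · simp_rw [ENNReal.mul_rpow_of_nonneg _ _ (ENNReal.toReal_nonneg (a := q))]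
    rw [lintegral_const_mul' _ _ (ENNReal.rpow_ne_top_of_nonneg ENNReal.toReal_nonneg hc),
      rpow_mul_rpow_inv hq hq']

lemma LqNorm_const_mul_le {q : ℝ≥0∞} (hq : 0 < q) (s : Set ℝ) (c : ℝ≥0∞)
    (f : ℝ → ℝ≥0∞) : c * LqNorm q s f ≤ LqNorm q s (fun t => c * f t) := by
  unfold LqNorm
  split_ifs with hq'
  · exact ENNReal.essSup_const_mul.ge
  · simp_rw [ENNReal.mul_rpow_of_nonneg _ _ (ENNReal.toReal_nonneg (a := q))]
    rw [← rpow_mul_rpow_inv hq hq']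
    exact ENNReal.rpow_le_rpow (lintegral_const_mul_le _ _) ENNReal.toReal_nonneg

lemma LqNorm_union (q : ℝ≥0∞) : ∃ C : ℝ≥0, ∀ (s t : Set ℝ) (f : ℝ → ℝ≥0∞),
    LqNorm q (s ∪ t) f ≤ C * (LqNorm q s f + LqNorm q t f) := by
  by_cases hq : q = ∞
  · refine ⟨1, fun s t f => ?_⟩
    simp only [LqNorm, if_pos hq, ENNReal.coe_one, one_mul]
    refine essSup_le_of_ae_le _ ((ae_restrict_union_iff s t _).2 ⟨?_, ?_⟩)
    · filter_upwards [ENNReal.ae_le_essSup (μ := volume.restrict s) f] with x hx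
      exact hx.trans le_self_add
    · filter_upwards [ENNReal.ae_le_essSup (μ := volume.restrict t) f] with x hx
      exact hx.trans le_add_self
  · refine ⟨(ENNReal.LpAddConst (ENNReal.ofReal q⁻¹.toReal)⁻¹).toNNReal, fun s t f => ?_⟩
    rw [ENNReal.coe_toNNReal (ENNReal.LpAddConst_lt_top _).ne]
    simp only [LqNorm, if_neg hq]
    refine (ENNReal.rpow_le_rpow (lintegral_union_le _ _ _) ENNReal.toReal_nonneg).trans ?_
    exact ENNReal.rpow_add_le_mul_rpow_add_rpow' _ _ ENNReal.toReal_nonneg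

lemma ofReal_rpow_inv {q : ℝ≥0∞} (hq : 0 < q) (hq' : q ≠ ∞) {u : ℝ} (hu : 0 < u) :
    ENNReal.ofReal (u ^ (-q⁻¹.toReal)) ^ q.toReal = ENNReal.ofReal u⁻¹ := by
  have := toReal_pos_of hq hq'
  rw [ENNReal.ofReal_rpow_of_pos (Real.rpow_pos_of_pos hu _), ← Real.rpow_mul hu.le,
    ENNReal.toReal_inv, neg_mul, inv_mul_cancel₀ this.ne', Real.rpow_neg_one]

/-- Lower bound for the norm over `(t, e t)`. -/
lemma LqNorm_lower {q : ℝ≥0∞} (hq : 0 < q) {t : ℝ} (ht : 0 < t) (F : ℝ → ℝ≥0∞) (F0 : ℝ≥0∞)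
    (h : ∀ u ∈ Ioo t (Real.exp 1 * t), F0 ≤ F u) :
    ENNReal.ofReal (Real.exp (-q⁻¹.toReal)) * F0 ≤
      LqNorm q (Ioo t (Real.exp 1 * t)) (fun u => ENNReal.ofReal (u ^ (-q⁻¹.toReal)) * F u) := by
  have he : (2:ℝ) ≤ Real.exp 1 := by have := Real.add_one_le_exp (1:ℝ); linarith
  have hvol : ENNReal.ofReal t ≤ volume (Ioo t (Real.exp 1 * t)) := by
    rw [Real.volume_Ioo]
    apply ENNReal.ofReal_le_ofReal
    nlinarith
  by_cases hq' : q = ∞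
  · subst hq'
    simp only [ENNReal.inv_top, ENNReal.toReal_zero, neg_zero, Real.rpow_zero, Real.exp_zero,
      ENNReal.ofReal_one, one_mul, LqNorm, if_true]
    have h1 := ENNReal.ae_le_essSup (μ := volume.restrict (Ioo t (Real.exp 1 * t))) F
    have h2 : ∀ᵐ u ∂(volume.restrict (Ioo t (Real.exp 1 * t))), u ∈ Ioo t (Real.exp 1 * t) :=
      ae_restrict_mem measurableSet_Ioo
    have : NeBot (ae (volume.restrict (Ioo t (Real.exp 1 * t)))) := by
      rw [ae_neBot]
      intro h0
      have : volume (Ioo t (Real.exp 1 * t)) = 0 := by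
        rw [← Measure.restrict_apply_univ, h0]; simp
      rw [this] at hvol
      simp at hvol
      linarith
    obtain ⟨u, hu1, hu2⟩ := (h1.and h2).exists
    exact (h u hu2).trans hu1
  · have hqp := toReal_pos_of hq hq'
    calc ENNReal.ofReal (Real.exp (-q⁻¹.toReal)) * F0
        = (ENNReal.ofReal (Real.exp (-q⁻¹.toReal)) ^ q.toReal * F0 ^ q.toReal) ^ q⁻¹.toReal := by
          rw [rpow_mul_rpow_inv hq hq', ← ENNReal.rpow_mul, ENNReal.toReal_inv,
            mul_inv_cancel₀ hqp.ne', ENNReal.rpow_one]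
      _ ≤ _ := by
          simp only [LqNorm, if_neg hq']
          refine ENNReal.rpow_le_rpow ?_ ENNReal.toReal_nonneg
          calc ENNReal.ofReal (Real.exp (-q⁻¹.toReal)) ^ q.toReal * F0 ^ q.toReal
              = ENNReal.ofReal (Real.exp 1)⁻¹ * F0 ^ q.toReal := by
                rw [← ofReal_rpow_inv hq hq' (Real.exp_pos 1)]
                simp
            _ = (ENNReal.ofReal (Real.exp 1 * t)⁻¹ * F0 ^ q.toReal) * ENNReal.ofReal t := by
                rw [mul_right_comm, ← ENNReal.ofReal_mul (by positivity)]
                congr 2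
                field_simp
            _ ≤ (ENNReal.ofReal (Real.exp 1 * t)⁻¹ * F0 ^ q.toReal)
                  * volume (Ioo t (Real.exp 1 * t)) := by gcongr
            _ = ∫⁻ u in Ioo t (Real.exp 1 * t),
                  (ENNReal.ofReal (Real.exp 1 * t)⁻¹ * F0 ^ q.toReal) := by
                rw [setLIntegral_const]
            _ ≤ _ := by
                refine setLIntegral_mono' measurableSet_Ioo fun u hu => ?_
                have hu0 : 0 < u := ht.trans hu.1
                rw [ENNReal.mul_rpow_of_nonneg _ _ hqp.le, ofReal_rpow_inv hq hq' hu0]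
                gcongr
                · exact hu.2.le
                · exact h u hu

lemma LqNorm_power_Ici {q : ℝ≥0∞} (hq : 0 < q) {α : ℝ} (hα : 0 < α) :
    ∃ C : ℝ≥0, ∀ s : ℝ, 0 < s →
      LqNorm q (Ici s) (fun u => ENNReal.ofReal (u ^ (-q⁻¹.toReal)) *
        ENNReal.ofReal ((u / s) ^ (-α))) ≤ C := by
  by_cases hq' : q = ∞
  · subst hq'
    refine ⟨1, fun s hs => ?_⟩
    simp only [ENNReal.inv_top, ENNReal.toReal_zero, neg_zero, Real.rpow_zero,
      ENNReal.ofReal_one, one_mul, LqNorm, if_true]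
    refine essSup_le_of_ae_le _ ((ae_restrict_iff' measurableSet_Ici).2
      (Eventually.of_forall fun u (hu : s ≤ u) => ?_))
    simp only [ENNReal.coe_one, ENNReal.ofReal_le_one]
    exact Real.rpow_le_one_of_one_le_of_nonpos ((one_le_div hs).2 hu) (by linarith)
  · have hqp := toReal_pos_of hq hq'
    set p := q.toReal
    refine ⟨(ENNReal.ofReal (1 / (α * p)) ^ q⁻¹.toReal).toNNReal, fun s hs => ?_⟩
    rw [ENNReal.coe_toNNReal (by simp [ENNReal.rpow_eq_top_iff])]
    simp only [LqNorm, if_neg hq']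
    refine ENNReal.rpow_le_rpow (le_of_eq ?_) ENNReal.toReal_nonneg
    rw [setLIntegral_congr_fun (g := fun u => ENNReal.ofReal (s ^ (α * p) * u ^ (-1 - α * p)))
      measurableSet_Ici]
    · have hIntg : IntegrableOn (fun u : ℝ => u ^ (-1 - α * p)) (Ici s) := by
        rw [integrableOn_Ici_iff_integrableOn_Ioi]
        exact integrableOn_Ioi_rpow_of_lt (by nlinarith) hs
      rw [← ofReal_integral_eq_lintegral_ofReal (hIntg.const_mul _), integral_const_mul,
        integral_Ici_eq_integral_Ioi, integral_Ioi_rpow_of_lt (by nlinarith) hs]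
      · congr 1
        rw [show -1 - α * p + 1 = -(α * p) by ring, Real.rpow_neg hs.le]
        have : s ^ (α * p) ≠ 0 := (Real.rpow_pos_of_pos hs _).ne'
        have : α * p ≠ 0 := by positivity
        field_simp
      · refine (ae_restrict_iff' measurableSet_Ici).2
          (Eventually.of_forall fun u (hu : s ≤ u) => ?_)
        have : 0 < u := hs.trans_le hu
        simp only [Pi.zero_apply]
        positivity
    · intro u hu
      have hu0 : 0 < u := hs.trans_le hu
      have : 0 < u / s := div_pos hu0 hs
      simp only
      rw [ENNReal.mul_rpow_of_nonneg _ _ hqp.le, ofReal_rpow_inv hq hq' hu0,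
        ENNReal.ofReal_rpow_of_pos (by positivity), ← ENNReal.ofReal_mul (by positivity),
        ← Real.rpow_mul this.le, Real.div_rpow hu0.le hs.le, sub_eq_add_neg, Real.rpow_add hu0,
        Real.rpow_neg_one, neg_mul, Real.rpow_neg hs.le]
      congr 1
      field_simp

lemma LqNorm_power_Ioc {q : ℝ≥0∞} (hq : 0 < q) {α : ℝ} (hα : 0 < α) :
    ∃ C : ℝ≥0, ∀ s : ℝ, 0 < s →
      LqNorm q (Ioc 0 s) (fun u => ENNReal.ofReal (u ^ (-q⁻¹.toReal)) *
        ENNReal.ofReal ((u / s) ^ α)) ≤ C := by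
  by_cases hq' : q = ∞
  · subst hq'
    refine ⟨1, fun s hs => ?_⟩
    simp only [ENNReal.inv_top, ENNReal.toReal_zero, neg_zero, Real.rpow_zero,
      ENNReal.ofReal_one, one_mul, LqNorm, if_true]
    refine essSup_le_of_ae_le _ ((ae_restrict_iff' measurableSet_Ioc).2
      (Eventually.of_forall fun u hu => ?_))
    simp only [ENNReal.coe_one, ENNReal.ofReal_le_one]
    exact Real.rpow_le_one (div_nonneg hu.1.le hs.le) ((div_le_one hs).2 hu.2) hα.le
  · have hqp := toReal_pos_of hq hq'
    set p := q.toReal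
    refine ⟨(ENNReal.ofReal (1 / (α * p)) ^ q⁻¹.toReal).toNNReal, fun s hs => ?_⟩
    rw [ENNReal.coe_toNNReal (by simp [ENNReal.rpow_eq_top_iff])]
    simp only [LqNorm, if_neg hq']
    refine ENNReal.rpow_le_rpow (le_of_eq ?_) ENNReal.toReal_nonneg
    rw [setLIntegral_congr_fun (g := fun u => ENNReal.ofReal ((s ^ (α * p))⁻¹ * u ^ (-1 + α * p)))
      measurableSet_Ioc]
    · have hap : 0 < α * p := by positivity
      have hIntg : IntegrableOn (fun u : ℝ => u ^ (-1 + α * p)) (Ioc 0 s) := by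
        rw [← intervalIntegrable_iff_integrableOn_Ioc_of_le hs.le]
        exact intervalIntegral.intervalIntegrable_rpow' (by linarith)
      rw [← ofReal_integral_eq_lintegral_ofReal (hIntg.const_mul _), integral_const_mul,
        ← intervalIntegral.integral_of_le hs.le, integral_rpow (Or.inl (by linarith))]
      · congr 1
        rw [show -1 + α * p + 1 = (α * p) by ring, Real.zero_rpow hap.ne']
        have : s ^ (α * p) ≠ 0 := (Real.rpow_pos_of_pos hs _).ne'
        field_simp
        ring
      · refine (ae_restrict_iff' measurableSet_Ioc).2
          (Eventually.of_forall fun u hu => ?_)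
        have : 0 < u := hu.1
        simp only [Pi.zero_apply]
        positivity
    · intro u hu
      have hu0 : 0 < u := hu.1
      have : 0 < u / s := div_pos hu0 hs
      simp only
      rw [ENNReal.mul_rpow_of_nonneg _ _ hqp.le, ofReal_rpow_inv hq hq' hu0,
        ENNReal.ofReal_rpow_of_pos (by positivity), ← ENNReal.ofReal_mul (by positivity),
        ← Real.rpow_mul this.le, Real.div_rpow hu0.le hs.le, Real.rpow_add hu0,
        Real.rpow_neg_one]
      congr 1
      field_simp

/-! ### Discretisation -/

/-- The `ℓ_r(ℤ)` quasi-norm. -/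
def lr (r : ℝ≥0∞) (x : ℤ → ℝ≥0∞) : ℝ≥0∞ :=
  if r = ∞ then ⨆ k, x k else (∑' k, x k ^ r.toReal) ^ r⁻¹.toReal

lemma lr_mono {r : ℝ≥0∞} {x y : ℤ → ℝ≥0∞} (h : ∀ k, x k ≤ y k) : lr r x ≤ lr r y := by
  unfold lr
  split_ifs with hr
  · exact iSup_mono h
  · exact ENNReal.rpow_le_rpow (ENNReal.tsum_le_tsum fun k =>
      ENNReal.rpow_le_rpow (h k) ENNReal.toReal_nonneg) ENNReal.toReal_nonneg

lemma lr_const_mul {r : ℝ≥0∞} (hr : 0 < r) (c : ℝ≥0∞) (x : ℤ → ℝ≥0∞) :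
    lr r (fun k => c * x k) = c * lr r x := by
  unfold lr
  split_ifs with hr'
  · exact (ENNReal.mul_iSup _ _).symm
  · simp_rw [ENNReal.mul_rpow_of_nonneg _ _ (ENNReal.toReal_nonneg (a := r))]
    rw [ENNReal.tsum_mul_left, rpow_mul_rpow_inv hr hr']

lemma tsum_fiber_le (φ : ℤ → ℤ) (N : ℕ) (hφ : ∀ k l, φ k = φ l → |k - l| ≤ N) (y : ℤ → ℝ≥0∞) :
    ∑' k, y (φ k) ≤ ((2 * N + 1 : ℕ) : ℝ≥0∞) * ∑' j, y j := by
  classical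
  calc ∑' k, y (φ k) = ∑' k, ∑' j, (if φ k = j then y j else 0) := by
        refine tsum_congr fun k => ?_
        rw [tsum_ite_eq' ]
    _ = ∑' j, ∑' k, (if φ k = j then y j else 0) := ENNReal.tsum_comm
    _ ≤ ∑' j, ((2 * N + 1 : ℕ) : ℝ≥0∞) * y j := by
        refine ENNReal.tsum_le_tsum fun j => ?_
        by_cases hj : ∃ k0, φ k0 = j
        · obtain ⟨k0, hk0⟩ := hj
          rw [tsum_eq_sum (s := Finset.Icc (k0 - N) (k0 + N))]
          · calc _ ≤ ∑ k ∈ Finset.Icc (k0 - N) (k0 + N), y j := by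
                  refine Finset.sum_le_sum fun k _ => ?_
                  split_ifs <;> simp
              _ = _ := by
                  rw [Finset.sum_const, nsmul_eq_mul, Int.card_Icc]
                  congr 2
                  omega
          · intro k hk
            rw [if_neg]
            intro h
            apply hk
            have := hφ k k0 (h.trans hk0.symm)
            rw [abs_le] at this
            rw [Finset.mem_Icc]
            constructor <;> linarith
        · push Not at hj
          simp [hj]
    _ = _ := ENNReal.tsum_mul_left

lemma lr_fiber (r : ℝ≥0∞) (N : ℕ) : ∃ C : ℝ≥0, ∀ (φ : ℤ → ℤ),
    (∀ k l, φ k = φ l → |k - l| ≤ N) → ∀ (y : ℤ → ℝ≥0∞), lr r (fun k => y (φ k)) ≤ C * lr r y := by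
  by_cases hr' : r = ∞
  · refine ⟨1, fun φ hφ y => ?_⟩
    simp only [lr, if_pos hr', ENNReal.coe_one, one_mul]
    exact iSup_le fun k => le_iSup y (φ k)
  · refine ⟨(((2 * N + 1 : ℕ) : ℝ≥0∞) ^ r⁻¹.toReal).toNNReal, fun φ hφ y => ?_⟩
    rw [ENNReal.coe_toNNReal (ENNReal.rpow_ne_top_of_nonneg ENNReal.toReal_nonneg
      (ENNReal.natCast_ne_top _))]
    simp only [lr, if_neg hr']
    rw [← ENNReal.mul_rpow_of_nonneg _ _ ENNReal.toReal_nonneg]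
    exact ENNReal.rpow_le_rpow (tsum_fiber_le φ N hφ _) ENNReal.toReal_nonneg

lemma lr_shift_sup {r : ℝ≥0∞} (hr : 0 < r) {δ : ℝ} (hδ : 0 < δ) : ∃ C : ℝ≥0,
    ∀ x : ℤ → ℝ≥0∞,
      lr r (fun k => ⨆ m : ℕ, ENNReal.ofReal (Real.exp (-δ * m)) * x (k - m)) ≤ C * lr r x := by
  by_cases hr' : r = ∞
  · refine ⟨1, fun x => ?_⟩
    simp only [lr, if_pos hr', ENNReal.coe_one, one_mul]
    refine iSup_le fun k => iSup_le fun m => ?_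
    calc _ ≤ 1 * x (k - m) := by
          gcongr
          rw [ENNReal.ofReal_le_one, Real.exp_le_one_iff]
          have : (0:ℝ) ≤ m := m.cast_nonneg
          nlinarith
      _ ≤ _ := by rw [one_mul]; exact le_iSup x _
  · have hp := toReal_pos_of hr hr'
    set p := r.toReal with hpdef
    set S : ℝ≥0∞ := ∑' m : ℕ, ENNReal.ofReal (Real.exp (-δ * m)) ^ p with hS
    have hSfin : S ≠ ∞ := by
      have h1 : ∀ m : ℕ, ENNReal.ofReal (Real.exp (-δ * m)) ^ p
          = ENNReal.ofReal (Real.exp (-δ * p)) ^ m := by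
        intro m
        rw [ENNReal.ofReal_rpow_of_pos (Real.exp_pos _), ← ENNReal.ofReal_pow (Real.exp_pos _).le,
          ← Real.exp_mul, ← Real.exp_nat_mul]
        congr 2
        ring
      rw [hS]
      simp_rw [h1]
      rw [ENNReal.tsum_geometric]
      refine ENNReal.inv_ne_top.2 ?_
      rw [← pos_iff_ne_zero, tsub_pos_iff_lt, ENNReal.ofReal_lt_one, Real.exp_lt_one_iff]
      nlinarith
    refine ⟨(S ^ r⁻¹.toReal).toNNReal, fun x => ?_⟩
    rw [ENNReal.coe_toNNReal (ENNReal.rpow_ne_top_of_nonneg ENNReal.toReal_nonneg hSfin)]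
    simp only [lr, if_neg hr']
    rw [← ENNReal.mul_rpow_of_nonneg _ _ ENNReal.toReal_nonneg]
    refine ENNReal.rpow_le_rpow ?_ ENNReal.toReal_nonneg
    calc ∑' k, (⨆ m : ℕ, ENNReal.ofReal (Real.exp (-δ * m)) * x (k - m)) ^ p
        ≤ ∑' k : ℤ, ∑' m : ℕ, ENNReal.ofReal (Real.exp (-δ * m)) ^ p * x (k - m) ^ p := by
          refine ENNReal.tsum_le_tsum fun k => ?_
          rw [← ENNReal.le_rpow_inv_iff hp]
          refine iSup_le fun m => ?_
          rw [ENNReal.le_rpow_inv_iff hp, ENNReal.mul_rpow_of_nonneg _ _ hp.le]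
          exact ENNReal.le_tsum
            (f := fun m : ℕ => ENNReal.ofReal (Real.exp (-δ * m)) ^ p * x (k - m) ^ p) m
      _ = ∑' m : ℕ, ∑' k : ℤ, ENNReal.ofReal (Real.exp (-δ * m)) ^ p * x (k - m) ^ p :=
          ENNReal.tsum_comm
      _ = ∑' m : ℕ, ENNReal.ofReal (Real.exp (-δ * m)) ^ p * ∑' k, x k ^ p := by
          refine tsum_congr fun m => ?_
          rw [ENNReal.tsum_mul_left]
          congr 1
          exact (Equiv.subRight (m : ℤ)).tsum_eq (fun k => x k ^ p)
      _ = _ := ENNReal.tsum_mul_right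

/-- `F` changes by at most the factor `C` on each logarithmic unit interval. -/
def LogLip (C : ℝ≥0) (F : ℝ → ℝ≥0∞) : Prop :=
  ∀ s t : ℝ, 0 < s → 0 < t → |Real.log s - Real.log t| ≤ 1 → F s ≤ C * F t

lemma exists_int_log {t : ℝ} (ht : 0 < t) :
    ∃ k : ℤ, t ∈ Ico (Real.exp k) (Real.exp (k + 1)) := by
  refine ⟨⌊Real.log t⌋, ?_, ?_⟩
  · rw [← Real.le_log_iff_exp_le ht]; exact Int.floor_le _
  · rw [← Real.log_lt_iff_lt_exp ht]; exact Int.lt_floor_add_one _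

lemma log_near {t : ℝ} {k : ℤ} (ht : t ∈ Ico (Real.exp k) (Real.exp (k + 1))) :
    0 < t ∧ |Real.log t - Real.log (Real.exp k)| ≤ 1 := by
  have h0 : 0 < t := (Real.exp_pos _).trans_le ht.1
  refine ⟨h0, ?_⟩
  rw [Real.log_exp]
  have h1 := (Real.le_log_iff_exp_le h0).2 ht.1
  have h2 := (Real.log_lt_iff_lt_exp h0).2 ht.2
  rw [abs_le]; constructor <;> linarith

lemma Ioi_eq_iUnion : Ioi (0:ℝ) = ⋃ k : ℤ, Ico (Real.exp k) (Real.exp (k + 1)) := by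
  ext t
  simp only [mem_iUnion]
  constructor
  · intro ht; exact exists_int_log ht
  · rintro ⟨k, hk⟩; exact (log_near hk).1

lemma Ico_exp_disjoint : Pairwise (Function.onFun Disjoint
    (fun k : ℤ => Ico (Real.exp k) (Real.exp (k + 1)))) := by
  intro k l hkl
  rw [Function.onFun, Set.disjoint_left]
  intro t hk hl
  apply hkl
  have h0 := (log_near hk).1
  have h1 := (Real.le_log_iff_exp_le h0).2 hk.1
  have h2 := (Real.log_lt_iff_lt_exp h0).2 hk.2
  have h3 := (Real.le_log_iff_exp_le h0).2 hl.1
  have h4 := (Real.log_lt_iff_lt_exp h0).2 hl.2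
  have h5 : (k:ℝ) < l + 1 := by linarith
  have h6 : (l:ℝ) < k + 1 := by linarith
  have h7 : k < l + 1 := by exact_mod_cast h5
  have h8 : l < k + 1 := by exact_mod_cast h6
  omega

lemma discretize {r : ℝ≥0∞} (hr : 0 < r) (C : ℝ≥0) : ∃ D : ℝ≥0, ∀ F : ℝ → ℝ≥0∞, LogLip C F →
    LqNorm r (Ioi 0) (fun u => ENNReal.ofReal (u ^ (-r⁻¹.toReal)) * F u)
        ≤ D * lr r (fun k => F (Real.exp k)) ∧
    lr r (fun k => F (Real.exp k)) ≤
      D * LqNorm r (Ioi 0) (fun u => ENNReal.ofReal (u ^ (-r⁻¹.toReal)) * F u) := by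
  have he : (2:ℝ) ≤ Real.exp 1 := by have := Real.add_one_le_exp (1:ℝ); linarith
  have he3 : Real.exp 1 ≤ 3 := by have := Real.exp_one_lt_d9; linarith
  by_cases hr' : r = ∞
  · subst hr'
    refine ⟨C, fun F hF => ⟨?_, ?_⟩⟩
    · simp only [ENNReal.inv_top, ENNReal.toReal_zero, neg_zero, Real.rpow_zero,
        ENNReal.ofReal_one, one_mul, LqNorm, if_true, lr]
      refine essSup_le_of_ae_le _ ((ae_restrict_iff' measurableSet_Ioi).2
        (Eventually.of_forall fun u hu => ?_))
      obtain ⟨k, hk⟩ := exists_int_log hu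
      refine (hF u (Real.exp k) hu (Real.exp_pos _) (log_near hk).2).trans ?_
      exact mul_le_mul_right (le_iSup (fun k : ℤ => F (Real.exp k)) k) _
    · simp only [lr, if_true]
      refine iSup_le fun k => ?_
      rw [← LqNorm_const_mul hr _ _ ENNReal.coe_ne_top]
      have := LqNorm_lower hr (Real.exp_pos k) (fun u => C * F u) (F (Real.exp k)) (by
        intro u hu
        have hk : u ∈ Ico (Real.exp k) (Real.exp (k + 1)) :=
          ⟨hu.1.le, by rw [add_comm, Real.exp_add]; exact hu.2⟩
        obtain ⟨h1, h2⟩ := log_near hk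
        rw [abs_sub_comm] at h2
        exact hF _ _ (Real.exp_pos _) h1 h2)
      simp only [ENNReal.inv_top, ENNReal.toReal_zero, neg_zero, Real.exp_zero, ENNReal.ofReal_one,
        one_mul, Real.rpow_zero] at this ⊢
      refine this.trans (LqNorm_mono_set ?_ _)
      intro u hu
      exact (Real.exp_pos k).trans hu.1
  · have hp := toReal_pos_of hr hr'
    have hri : r⁻¹.toReal = r.toReal⁻¹ := ENNReal.toReal_inv r
    have hexp : ∀ k : ℤ, Real.exp (k + 1) = Real.exp 1 * Real.exp k := fun k => by
      rw [add_comm, Real.exp_add]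
    have key : ∀ F : ℝ → ℝ≥0∞, LqNorm r (Ioi 0) (fun u => ENNReal.ofReal (u ^ (-r⁻¹.toReal)) * F u)
        = (∑' k : ℤ, ∫⁻ u in Ico (Real.exp k) (Real.exp (k + 1)),
          (ENNReal.ofReal (u ^ (-r⁻¹.toReal)) * F u) ^ r.toReal) ^ r⁻¹.toReal := by
      intro F
      simp only [LqNorm, if_neg hr']
      rw [Ioi_eq_iUnion, lintegral_iUnion (fun _ => measurableSet_Ico) Ico_exp_disjoint]
    have two : ∀ F : ℝ → ℝ≥0∞, LogLip C F → ∀ k : ℤ,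
        (∫⁻ u in Ico (Real.exp k) (Real.exp (k + 1)),
          (ENNReal.ofReal (u ^ (-r⁻¹.toReal)) * F u) ^ r.toReal)
          ≤ 2 * (C * F (Real.exp k)) ^ r.toReal ∧
        F (Real.exp k) ^ r.toReal ≤ 3 * (C ^ r.toReal *
          (∫⁻ u in Ico (Real.exp k) (Real.exp (k + 1)),
          (ENNReal.ofReal (u ^ (-r⁻¹.toReal)) * F u) ^ r.toReal)) := by
      intro F hF k
      have hk0 := Real.exp_pos (k:ℝ)
      constructor
      · calc _ ≤ ∫⁻ u in Ico (Real.exp k) (Real.exp (k + 1)),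
              ENNReal.ofReal (Real.exp k)⁻¹ * (C * F (Real.exp k)) ^ r.toReal := by
              refine setLIntegral_mono' measurableSet_Ico fun u hu => ?_
              obtain ⟨h1, h2⟩ := log_near hu
              rw [ENNReal.mul_rpow_of_nonneg _ _ hp.le, ofReal_rpow_inv hr hr' h1]
              gcongr
              · exact hu.1
              · exact hF _ _ h1 hk0 h2
          _ = ENNReal.ofReal ((Real.exp k)⁻¹ * (Real.exp (k + 1) - Real.exp k))
                * (C * F (Real.exp k)) ^ r.toReal := by
              rw [setLIntegral_const, Real.volume_Ico, mul_right_comm,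
                ← ENNReal.ofReal_mul (by positivity)]
          _ ≤ _ := by
              gcongr
              rw [← ENNReal.ofReal_ofNat]
              apply ENNReal.ofReal_le_ofReal
              rw [inv_mul_le_iff₀ hk0, hexp]
              nlinarith
      · calc F (Real.exp k) ^ r.toReal
            = 3 * ((ENNReal.ofReal (1/3)) * F (Real.exp k) ^ r.toReal) := by
              rw [← mul_assoc, ← ENNReal.ofReal_ofNat, ← ENNReal.ofReal_mul (by norm_num)]
              norm_num
          _ ≤ _ := by
              refine mul_le_mul_right ?_ _
              rw [← lintegral_const_mul' _ _ (ENNReal.rpow_ne_top_of_nonneg hp.le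
                ENNReal.coe_ne_top)]
              calc (ENNReal.ofReal (1/3)) * F (Real.exp k) ^ r.toReal
                  ≤ ENNReal.ofReal ((Real.exp (k + 1))⁻¹ * (Real.exp (k + 1) - Real.exp k))
                    * F (Real.exp k) ^ r.toReal := by
                    gcongr
                    rw [le_inv_mul_iff₀ (Real.exp_pos _), hexp]
                    nlinarith
                _ = ∫⁻ u in Ico (Real.exp k) (Real.exp (k + 1)),
                    ENNReal.ofReal (Real.exp (k + 1))⁻¹ * F (Real.exp k) ^ r.toReal := by
                    rw [setLIntegral_const, Real.volume_Ico, mul_right_comm,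
                      ← ENNReal.ofReal_mul (by positivity)]
                _ ≤ _ := by
                    refine setLIntegral_mono' measurableSet_Ico fun u hu => ?_
                    obtain ⟨h1, h2⟩ := log_near hu
                    rw [abs_sub_comm] at h2
                    rw [ENNReal.mul_rpow_of_nonneg _ _ hp.le, ofReal_rpow_inv hr hr' h1,
                      mul_left_comm, ← ENNReal.mul_rpow_of_nonneg _ _ hp.le]
                    gcongr
                    · exact hu.2.le
                    · exact hF _ _ hk0 h1 h2
    refine ⟨((3:ℝ≥0∞) ^ r⁻¹.toReal).toNNReal * C, fun F hF => ?_⟩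
    rw [key, ENNReal.coe_mul, ENNReal.coe_toNNReal
      (ENNReal.rpow_ne_top_of_nonneg ENNReal.toReal_nonneg (by simp))]
    simp only [lr, if_neg hr']
    rw [mul_assoc, mul_assoc, ← rpow_mul_rpow_inv hr hr' (C:ℝ≥0∞),
      ← rpow_mul_rpow_inv hr hr' (C:ℝ≥0∞),
      ← ENNReal.mul_rpow_of_nonneg _ _ ENNReal.toReal_nonneg,
      ← ENNReal.mul_rpow_of_nonneg _ _ ENNReal.toReal_nonneg,
      ← ENNReal.tsum_mul_left, ← ENNReal.tsum_mul_left, ← ENNReal.tsum_mul_left,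
      ← ENNReal.tsum_mul_left]
    constructor
    · refine ENNReal.rpow_le_rpow (ENNReal.tsum_le_tsum fun k => ?_) ENNReal.toReal_nonneg
      refine (two F hF k).1.trans ?_
      rw [ENNReal.mul_rpow_of_nonneg _ _ hp.le]
      gcongr
      norm_num
    · exact ENNReal.rpow_le_rpow (ENNReal.tsum_le_tsum fun k => (two F hF k).2) ENNReal.toReal_nonneg

lemma LogLip.pow {C : ℝ≥0} {G : ℝ → ℝ≥0∞} (hG : LogLip C G) (n : ℕ) : ∀ s t : ℝ, 0 < s → 0 < t →
    |Real.log s - Real.log t| ≤ n → G s ≤ (C ^ n : ℝ≥0) * G t := by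
  induction n with
  | zero =>
    intro s t hs ht h
    have h1 : Real.log s = Real.log t := by
      rw [Nat.cast_zero, abs_nonpos_iff] at h; linarith
    have : s = t := Real.log_injOn_pos hs ht h1
    simp [this]
  | succ n ih =>
    intro s t hs ht h
    have hn : (0:ℝ) < (n:ℝ) + 1 := by positivity
    push_cast at h
    set d := Real.log s - Real.log t with hd
    have h1 := hG s (Real.exp (Real.log t + d * (n / (n + 1)))) hs (Real.exp_pos _) (by
      rw [Real.log_exp, show Real.log s - (Real.log t + d * (n / (n + 1))) = d / (n + 1) by
        rw [hd]; field_simp; ring, abs_div, abs_of_pos hn, div_le_one hn]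
      exact h)
    have h2 := ih (Real.exp (Real.log t + d * (n / (n + 1)))) t (Real.exp_pos _) ht (by
      rw [Real.log_exp, add_sub_cancel_left, abs_mul, abs_of_nonneg (a := (n:ℝ) / (n + 1)) (by positivity),
        mul_div_assoc', div_le_iff₀ hn, mul_comm]
      gcongr)
    refine h1.trans ?_
    rw [pow_succ', ENNReal.coe_mul, mul_assoc]
    gcongr

lemma LogLip.mul {C D : ℝ≥0} {F G : ℝ → ℝ≥0∞} (hF : LogLip C F) (hG : LogLip D G) :
    LogLip (C * D) (fun t => F t * G t) := by
  intro s t hs ht h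
  refine (mul_le_mul' (hF s t hs ht h) (hG s t hs ht h)).trans (le_of_eq ?_)
  rw [ENNReal.coe_mul]; ring

lemma LSV.logLip {b : ℝ → ℝ} (hb : LSV b) (p : ℝ) :
    ∃ C : ℝ≥0, LogLip C (fun u => ENNReal.ofReal (u ^ p * b u)) := by
  obtain ⟨C, hC, h⟩ := hb.2 1 one_pos
  refine ⟨(Real.exp (|p| + C + 1)).toNNReal, fun s t hs ht hst => ?_⟩
  have e : (((Real.exp (|p| + C + 1)).toNNReal : ℝ≥0) : ℝ≥0∞)
    = ENNReal.ofReal (Real.exp (|p| + C + 1)) := rfl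
  rw [e, ← ENNReal.ofReal_mul (Real.exp_pos _).le]
  apply ENNReal.ofReal_le_ofReal
  have bs := hb.1 s hs
  have bt := hb.1 t ht
  have sp := Real.rpow_pos_of_pos hs p
  have tp := Real.rpow_pos_of_pos ht p
  rw [← Real.log_le_log_iff (by positivity) (by positivity), Real.log_mul (by positivity)
    (by positivity), Real.log_mul (by positivity) (by positivity), Real.log_exp,
    Real.log_mul (by positivity) (by positivity), Real.log_rpow hs, Real.log_rpow ht]
  have h1 := h s t hs ht
  have h2 : p * (Real.log s - Real.log t) ≤ |p| * 1 := by
    refine (le_abs_self _).trans ?_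
    rw [abs_mul]; gcongr
  linarith

lemma change_var {r : ℝ≥0∞} (hr : 0 < r) (C : ℝ≥0) {α B : ℝ} (hα : 0 < α) (R : ℤ → ℝ)
    (hR : ∀ k l : ℤ, |R k - R l - α * (k - l)| ≤ B + α / 2 * |(k:ℝ) - l|) :
    ∃ D : ℝ≥0, ∀ G : ℝ → ℝ≥0∞, LogLip C G →
      lr r (fun k => G (Real.exp (R k))) ≤ D * lr r (fun k => G (Real.exp k)) ∧
      lr r (fun k => G (Real.exp k)) ≤ D * lr r (fun k => G (Real.exp (R k))) := by
  have hB : 0 ≤ B := by simpa using hR 0 0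
  -- first direction
  obtain ⟨N₁, hN₁⟩ := exists_nat_ge ((1 + B) / (α / 2))
  obtain ⟨C₁, hC₁⟩ := lr_fiber r N₁
  have hφ : ∀ k l : ℤ, ⌊R k⌋ = ⌊R l⌋ → |k - l| ≤ (N₁ : ℤ) := by
    intro k l hkl
    have h1 := Int.abs_sub_lt_one_of_floor_eq_floor hkl
    have h2 := hR k l
    have h3 : α * |(k:ℝ) - l| ≤ 1 + (B + α / 2 * |(k:ℝ) - l|) := by
      calc α * |(k:ℝ) - l| = |α * (k - l)| := by rw [abs_mul, abs_of_pos hα]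
        _ = |(R k - R l) - (R k - R l - α * (k - l))| := by congr 1; ring
        _ ≤ |R k - R l| + |R k - R l - α * (k - l)| := abs_sub _ _
        _ ≤ _ := by gcongr
    have h4 : |(k:ℝ) - l| ≤ (1 + B) / (α / 2) := by
      rw [le_div_iff₀ (by positivity)]; linarith
    have h5 := h4.trans hN₁
    exact_mod_cast h5
  -- second direction
  have hex : ∀ j : ℤ, ∃ k : ℤ, R k ≤ j ∧ (j:ℝ) < R (k + 1) := by
    intro j
    have : ∃ ub : ℤ, R ub ≤ j ∧ ∀ z : ℤ, R z ≤ j → z ≤ ub := by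
      apply Int.exists_greatest_of_bdd
      · obtain ⟨b, hb⟩ := exists_int_gt (|j - R 0 + B| / (α / 2))
        refine ⟨b, fun z hz => ?_⟩
        by_contra hlt
        push Not at hlt
        have hb0 : (0:ℝ) < b := lt_of_le_of_lt (by positivity) hb
        have hz0 : (b:ℝ) < z := by exact_mod_cast hlt
        have h1 := (abs_le.1 (hR z 0)).1
        rw [Int.cast_zero, sub_zero, abs_of_pos (hb0.trans hz0)] at h1
        rw [div_lt_iff₀ (by positivity)] at hb
        have := le_abs_self ((j:ℝ) - R 0 + B)
        nlinarith
      · obtain ⟨b, hb⟩ := exists_int_gt (|R 0 - j + B| / (α / 2))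
        refine ⟨-b, ?_⟩
        have hb0 : (0:ℝ) < b := lt_of_le_of_lt (by positivity) hb
        have h1 := (abs_le.1 (hR (-b) 0)).2
        rw [Int.cast_zero, sub_zero, Int.cast_neg, abs_neg, abs_of_pos hb0] at h1
        rw [div_lt_iff₀ (by positivity)] at hb
        have := le_abs_self (R 0 - (j:ℝ) + B)
        nlinarith
    obtain ⟨k, hk1, hk2⟩ := this
    refine ⟨k, hk1, ?_⟩
    by_contra hlt
    push Not at hlt
    have := hk2 _ hlt
    omega
  choose ψ hψ1 hψ2 using hex
  obtain ⟨n, hn⟩ := exists_nat_ge (B + α / 2 + α)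
  have hψ3 : ∀ j : ℤ, |(j:ℝ) - R (ψ j)| ≤ n := by
    intro j
    have h1 := (abs_le.1 (hR (ψ j + 1) (ψ j))).2
    push_cast at h1
    rw [add_sub_cancel_left, abs_one] at h1
    have := hψ1 j
    have := hψ2 j
    rw [abs_of_nonneg (by linarith)]
    linarith
  obtain ⟨C₂, hC₂⟩ := lr_fiber r (2 * n)
  have hψ4 : ∀ k l : ℤ, ψ k = ψ l → |k - l| ≤ ((2 * n : ℕ) : ℤ) := by
    intro k l hkl
    have h1 := hψ3 k
    have h2 := hψ3 l
    rw [← hkl] at h2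
    have h3 : |(k:ℝ) - l| ≤ 2 * n := by
      have := abs_sub_le (k:ℝ) (R (ψ k)) l
      rw [abs_sub_comm (R (ψ k))] at this
      linarith
    exact_mod_cast h3
  refine ⟨C * C₁ + C ^ n * C₂, fun G hG => ⟨?_, ?_⟩⟩
  · calc lr r (fun k => G (Real.exp (R k)))
        ≤ lr r (fun k => C * G (Real.exp (⌊R k⌋ : ℤ))) := by
          refine lr_mono fun k => hG _ _ (Real.exp_pos _) (Real.exp_pos _) ?_
          rw [Real.log_exp, Real.log_exp]
          have := Int.floor_le (R k)
          have := Int.lt_floor_add_one (R k)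
          rw [abs_le]; constructor <;> linarith
      _ = C * lr r (fun k => G (Real.exp (⌊R k⌋ : ℤ))) := lr_const_mul hr _ _
      _ ≤ C * (C₁ * lr r (fun k => G (Real.exp k))) := by
          gcongr
          exact hC₁ (fun k => ⌊R k⌋) hφ (fun k => G (Real.exp k))
      _ = (C * C₁ : ℝ≥0) * lr r (fun k => G (Real.exp k)) := by
          rw [ENNReal.coe_mul, mul_assoc]
      _ ≤ _ := by gcongr; exact le_self_add
  · calc lr r (fun k => G (Real.exp k))
        ≤ lr r (fun k => (C ^ n : ℝ≥0) * G (Real.exp (R (ψ k)))) := by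
          refine lr_mono fun k => hG.pow n _ _ (Real.exp_pos _) (Real.exp_pos _) ?_
          rw [Real.log_exp, Real.log_exp]
          exact hψ3 k
      _ = (C ^ n : ℝ≥0) * lr r (fun k => G (Real.exp (R (ψ k)))) := lr_const_mul hr _ _
      _ ≤ (C ^ n : ℝ≥0) * (C₂ * lr r (fun k => G (Real.exp (R k)))) := by
          gcongr
          exact hC₂ ψ hψ4 (fun k => G (Real.exp (R k)))
      _ = (C ^ n * C₂ : ℝ≥0) * lr r (fun k => G (Real.exp (R k))) := by
          rw [ENNReal.coe_mul, mul_assoc]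
      _ ≤ _ := by gcongr; exact le_add_self

/-! ### The K-functional -/

lemma Kf_mono (N₀ N₁ : E → ℝ≥0∞) {s t : ℝ} (h : s ≤ t) (f : E) :
    Kf N₀ N₁ s f ≤ Kf N₀ N₁ t f := by
  refine iInf_mono fun g => ?_
  gcongr

lemma Kf_scale (N₀ N₁ : E → ℝ≥0∞) {s t : ℝ} (hs : 0 < s) (h : s ≤ t) (f : E) :
    Kf N₀ N₁ t f ≤ ENNReal.ofReal (t / s) * Kf N₀ N₁ s f := by
  unfold Kf
  have h1 : 1 ≤ t / s := (one_le_div hs).2 h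
  rw [ENNReal.mul_iInf_of_ne (by simp only [ne_eq, ENNReal.ofReal_eq_zero, not_le]; linarith)
    ENNReal.ofReal_ne_top]
  refine iInf_mono fun g => ?_
  rw [mul_add, ← mul_assoc, ← ENNReal.ofReal_mul (by linarith), div_mul_cancel₀ _ hs.ne']
  gcongr
  exact le_mul_of_one_le_left (zero_le) (ENNReal.one_le_ofReal.2 h1)

lemma Kf_logLip (N₀ N₁ : E → ℝ≥0∞) (f : E) : LogLip 3 (fun t => Kf N₀ N₁ t f) := by
  intro s t hs ht h
  rcases le_total s t with hst | hst
  · exact (Kf_mono _ _ hst f).trans (le_mul_of_one_le_left zero_le (by norm_num))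
  · refine (Kf_scale _ _ ht hst f).trans ?_
    gcongr
    have : s / t ≤ 3 := by
      have h1 : Real.log (s / t) ≤ 1 := by
        rw [Real.log_div hs.ne' ht.ne']; exact (le_abs_self _).trans h
      rw [Real.log_le_iff_le_exp (by positivity)] at h1
      have := Real.exp_one_lt_d9
      linarith
    calc ENNReal.ofReal (s / t) ≤ ENNReal.ofReal 3 := ENNReal.ofReal_le_ofReal this
      _ = _ := by simp

lemma Kf_le_left (N₀ : E → ℝ≥0∞) (A₁ : QuasiBanach E) (t : ℝ) (g : E) :
    Kf N₀ A₁.N t g ≤ N₀ g := by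
  refine (iInf_le _ g).trans ?_
  simp [A₁.zero]

lemma QuasiBanach.sub_comm (A : QuasiBanach E) (x y : E) : A.N (x - y) = A.N (y - x) := by
  have := A.smul (-1) (y - x)
  simpa using this

lemma Kf_quasi (N₀ N₁ : E → ℝ≥0∞) {A : ℝ≥0∞} (hA : 1 ≤ A) (hA' : A ≠ ∞)
    (h : ∀ x y, N₁ (x + y) ≤ A * (N₁ x + N₁ y)) (t : ℝ) (f g : E) :
    Kf N₀ N₁ t f ≤ A * (Kf N₀ N₁ t g + ENNReal.ofReal t * N₁ (f - g)) := by
  conv_rhs => unfold Kf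
  rw [ENNReal.iInf_add, ENNReal.mul_iInf_of_ne (by intro h0; simp [h0] at hA) hA']
  refine le_iInf fun g' => (iInf_le _ g').trans ?_
  have h1 := h (g - g') (f - g)
  rw [show g - g' + (f - g) = f - g' by abel] at h1
  calc N₀ g' + ENNReal.ofReal t * N₁ (f - g')
      ≤ A * N₀ g' + ENNReal.ofReal t * (A * (N₁ (g - g') + N₁ (f - g))) := by
        gcongr
        exact le_mul_of_one_le_left zero_le hA
    _ = _ := by ring

/-! ### The function `Φ(t) = ‖s^{-1/r} β(s)‖_{r,(0,t)}` -/

/-- `‖s^{-1/r} β(s)‖_{r,(0,t)}`. -/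
def Phi (r : ℝ≥0∞) (β : ℝ → ℝ) (t : ℝ) : ℝ≥0∞ := LqNorm r (Ioo 0 t) (svWgt r β)

lemma svWgt_eq {r : ℝ≥0∞} (β : ℝ → ℝ) {u : ℝ} (hu : 0 < u) :
    svWgt r β u = ENNReal.ofReal (u ^ (-r⁻¹.toReal)) * ENNReal.ofReal (β u) := by
  unfold svWgt
  rw [ENNReal.ofReal_mul (Real.rpow_nonneg hu.le _)]

lemma Phi_lower {r : ℝ≥0∞} (hr : 0 < r) {β : ℝ → ℝ} (hβ : LSV β) :
    ∃ C : ℝ≥0, ∀ t : ℝ, 0 < t → ENNReal.ofReal (β t) ≤ C * Phi r β t := by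
  obtain ⟨C, hC⟩ := hβ.logLip 0
  refine ⟨(Real.exp r⁻¹.toReal).toNNReal * C, fun t ht => ?_⟩
  have he := Real.exp_pos 1
  have ht' : 0 < t / Real.exp 1 := by positivity
  have h1 := LqNorm_lower hr ht' (fun u => C * ENNReal.ofReal (β u)) (ENNReal.ofReal (β t)) (by
    intro u hu
    have hu0 : 0 < u := ht'.trans hu.1
    rw [mul_div_cancel₀ _ he.ne'] at hu
    have := hC t u ht hu0 (by
      have h1 := Real.log_lt_log ht' hu.1
      have h2 := Real.log_lt_log hu0 hu.2
      rw [Real.log_div ht.ne' he.ne', Real.log_exp] at h1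
      rw [abs_le]; constructor <;> linarith)
    simpa using this)
  rw [mul_div_cancel₀ _ he.ne'] at h1
  have h2 : LqNorm r (Ioo (t / Real.exp 1) t)
      (fun u => ENNReal.ofReal (u ^ (-r⁻¹.toReal)) * (C * ENNReal.ofReal (β u)))
      ≤ C * Phi r β t := by
    unfold Phi
    rw [← LqNorm_const_mul hr _ _ ENNReal.coe_ne_top]
    refine le_trans (LqNorm_mono measurableSet_Ioo fun u hu => ?_)
      (LqNorm_mono_set (Ioo_subset_Ioo_left ht'.le) _)
    rw [svWgt_eq _ (ht'.trans hu.1)]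
    exact (mul_left_comm _ _ _).le
  calc ENNReal.ofReal (β t)
      = ENNReal.ofReal (Real.exp r⁻¹.toReal) *
        (ENNReal.ofReal (Real.exp (-r⁻¹.toReal)) * ENNReal.ofReal (β t)) := by
        rw [← mul_assoc, ← ENNReal.ofReal_mul (Real.exp_pos _).le, ← Real.exp_add]
        simp
    _ ≤ ENNReal.ofReal (Real.exp r⁻¹.toReal) * (C * Phi r β t) := by
        exact mul_le_mul_right (h1.trans h2) _
    _ = _ := by rw [ENNReal.coe_mul, mul_assoc]; rfl

lemma Phi_mono {r : ℝ≥0∞} {β : ℝ → ℝ} {s t : ℝ} (h : s ≤ t) : Phi r β s ≤ Phi r β t :=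
  LqNorm_mono_set (Ioo_subset_Ioo_right h) _

lemma Phi_growth {r : ℝ≥0∞} (hr : 0 < r) {β : ℝ → ℝ} (hβ : LSV β) {ε : ℝ} (hε : 0 < ε) :
    ∃ C : ℝ≥0, ∀ s t : ℝ, 0 < s → s ≤ t →
      Phi r β t ≤ C * ENNReal.ofReal ((t / s) ^ ε) * Phi r β s := by
  obtain ⟨C₁, hC₁⟩ := LqNorm_union r
  obtain ⟨C₂, hC₂p, hC₂⟩ := hβ.bound hε
  obtain ⟨C₃, hC₃⟩ := LqNorm_power_Ioc hr hε
  obtain ⟨C₄, hC₄⟩ := Phi_lower hr hβ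
  refine ⟨C₁ * (1 + C₂.toNNReal * C₄ * C₃), fun s t hs hst => ?_⟩
  have ht : 0 < t := hs.trans_le hst
  have bs := hβ.1 s hs
  have hx : 1 ≤ (t / s) ^ ε := Real.one_le_rpow ((one_le_div hs).2 hst) hε.le
  have h1 : LqNorm r (Icc s t) (svWgt r β) ≤ C₂.toNNReal * C₄ * C₃ *
      ENNReal.ofReal ((t / s) ^ ε) * Phi r β s := by
    calc LqNorm r (Icc s t) (svWgt r β)
        ≤ LqNorm r (Icc s t) (fun u => ENNReal.ofReal (C₂ * (t / s) ^ ε * β s) *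
            (ENNReal.ofReal (u ^ (-r⁻¹.toReal)) * ENNReal.ofReal ((u / t) ^ ε))) := by
          refine LqNorm_mono measurableSet_Icc fun u hu => ?_
          have hu0 : 0 < u := hs.trans_le hu.1
          rw [svWgt_eq _ hu0, mul_left_comm,
            ← ENNReal.ofReal_mul (p := C₂ * (t / s) ^ ε * β s) (by positivity)]
          refine mul_le_mul_right (ENNReal.ofReal_le_ofReal ?_) _
          refine (hC₂ s u hs hu.1).2.trans (le_of_eq ?_)
          rw [show u / s = (t / s) * (u / t) by field_simp, Real.mul_rpow (by positivity)
            (by positivity)]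
          ring
      _ = ENNReal.ofReal (C₂ * (t / s) ^ ε * β s) * LqNorm r (Icc s t) (fun u =>
            (ENNReal.ofReal (u ^ (-r⁻¹.toReal)) * ENNReal.ofReal ((u / t) ^ ε))) :=
          LqNorm_const_mul hr _ _ ENNReal.ofReal_ne_top _
      _ ≤ ENNReal.ofReal (C₂ * (t / s) ^ ε * β s) * C₃ := by
          gcongr
          refine (LqNorm_mono_set ?_ _).trans (hC₃ t ht)
          intro u hu
          exact ⟨hs.trans_le hu.1, hu.2⟩
      _ = ENNReal.ofReal C₂ * ENNReal.ofReal ((t / s) ^ ε) * ENNReal.ofReal (β s) * C₃ := by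
          rw [ENNReal.ofReal_mul (by positivity), ENNReal.ofReal_mul (by positivity)]
      _ ≤ ENNReal.ofReal C₂ * ENNReal.ofReal ((t / s) ^ ε) * (C₄ * Phi r β s) * C₃ := by
          gcongr
          exact hC₄ s hs
      _ = _ := by
          change _ = ENNReal.ofReal C₂ * C₄ * C₃ * ENNReal.ofReal ((t / s) ^ ε) * Phi r β s
          ring
  calc Phi r β t ≤ LqNorm r (Ioo 0 s ∪ Icc s t) (svWgt r β) := by
        refine LqNorm_mono_set (fun u hu => ?_) _
        rcases lt_or_ge u s with h | h
        · exact Or.inl ⟨hu.1, h⟩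
        · exact Or.inr ⟨h, hu.2.le⟩
    _ ≤ C₁ * (Phi r β s + LqNorm r (Icc s t) (svWgt r β)) := hC₁ _ _ _
    _ ≤ C₁ * (ENNReal.ofReal ((t / s) ^ ε) * Phi r β s + C₂.toNNReal * C₄ * C₃ *
      ENNReal.ofReal ((t / s) ^ ε) * Phi r β s) := by
        gcongr
        exact le_mul_of_one_le_left zero_le (ENNReal.one_le_ofReal.2 hx)
    _ = _ := by push_cast; ring

lemma Phi_ne_top {r : ℝ≥0∞} (hr : 0 < r) {β : ℝ → ℝ} (hβ : LSV β) (hfin : Phi r β 1 ≠ ∞)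
    {t : ℝ} : Phi r β t ≠ ∞ := by
  rcases le_total t 1 with h | h
  · exact ne_top_of_le_ne_top hfin (Phi_mono h)
  · obtain ⟨C, hC⟩ := Phi_growth hr hβ one_pos
    refine ne_top_of_le_ne_top ?_ (hC 1 t one_pos h)
    exact ENNReal.mul_ne_top (ENNReal.mul_ne_top ENNReal.coe_ne_top ENNReal.ofReal_ne_top) hfin

lemma Phi_pos {r : ℝ≥0∞} (hr : 0 < r) {β : ℝ → ℝ} (hβ : LSV β) (hfin : Phi r β 1 ≠ ∞)
    {t : ℝ} (ht : 0 < t) : 0 < (Phi r β t).toReal := by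
  refine ENNReal.toReal_pos ?_ (Phi_ne_top hr hβ hfin)
  intro h0
  obtain ⟨C, hC⟩ := Phi_lower hr hβ
  have := hC t ht
  rw [h0, mul_zero, nonpos_iff_eq_zero, ENNReal.ofReal_eq_zero] at this
  have := hβ.1 t ht
  linarith

lemma Phi_lsv {r : ℝ≥0∞} (hr : 0 < r) {β : ℝ → ℝ} (hβ : LSV β) (hfin : Phi r β 1 ≠ ∞) :
    LSV (fun t => (Phi r β t).toReal) := by
  refine LSV.of_bound (fun t ht => Phi_pos hr hβ hfin ht) fun ε hε => ?_
  obtain ⟨C, hC⟩ := Phi_growth hr hβ hε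
  refine ⟨C + 1, by positivity, fun s t hs hst => ?_⟩
  have hx : 1 ≤ (t / s) ^ ε := Real.one_le_rpow ((one_le_div hs).2 hst) hε.le
  have ps := Phi_pos hr hβ hfin hs
  have pt := Phi_pos hr hβ hfin (hs.trans_le hst)
  constructor
  · have h1 : (Phi r β s).toReal ≤ (Phi r β t).toReal :=
      ENNReal.toReal_mono (Phi_ne_top hr hβ hfin) (Phi_mono hst)
    have h2 : 1 ≤ ((C:ℝ) + 1) * (t / s) ^ ε := by
      have : (0:ℝ) ≤ C := C.2
      nlinarith
    nlinarith
  · have h1 := ENNReal.toReal_mono (ENNReal.mul_ne_top (ENNReal.mul_ne_top ENNReal.coe_ne_top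
      ENNReal.ofReal_ne_top) (Phi_ne_top hr hβ hfin)) (hC s t hs hst)
    rw [ENNReal.toReal_mul, ENNReal.toReal_mul, ENNReal.coe_toReal,
      ENNReal.toReal_ofReal (by linarith)] at h1
    have : 0 ≤ (t / s) ^ ε * (Phi r β s).toReal := by positivity
    nlinarith

/-! ### The basic estimates -/

lemma wgt_split {u θ p b : ℝ} (hu : 0 < u) (K : ℝ≥0∞) :
    ENNReal.ofReal (u ^ (-θ - p) * b) * K
      = ENNReal.ofReal (u ^ (-p)) * (ENNReal.ofReal (u ^ (-θ) * b) * K) := by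
  rw [← mul_assoc, ← ENNReal.ofReal_mul (Real.rpow_nonneg hu.le _), sub_eq_add_neg,
    Real.rpow_add hu]
  congr 2
  ring

lemma Rnorm_le {q r : ℝ≥0∞} (hq : 0 < q) (hr : 0 < r) {β : ℝ → ℝ} (hβ : LSV β)
    {ε α : ℝ} (hε : 0 < ε) (hα : 0 < α) :
    ∃ C : ℝ≥0, ∀ (H : ℝ → ℝ≥0∞) (t : ℝ) (L : ℝ≥0∞), 0 < t → L ≠ ∞ →
      (∀ u, 0 < u → u ≤ t → H u ≤ L * ENNReal.ofReal ((u / t) ^ ε)) →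
      (∀ u, t ≤ u → H u ≤ L * ENNReal.ofReal ((u / t) ^ (-α))) →
      LqNorm r (Ioi 0) (fun s => svWgt r β s *
        LqNorm q (Ioi s) (fun u => ENNReal.ofReal (u ^ (-q⁻¹.toReal)) * H u))
        ≤ C * (L * Phi r β t) := by
  obtain ⟨Uq, hUq⟩ := LqNorm_union q
  obtain ⟨Ur, hUr⟩ := LqNorm_union r
  obtain ⟨P₁, hP₁⟩ := LqNorm_power_Ici hq hα
  obtain ⟨P₂, hP₂⟩ := LqNorm_power_Ioc hq hε
  obtain ⟨P₃, hP₃⟩ := LqNorm_power_Ici hr (half_pos hα)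
  obtain ⟨C₄, hC₄p, hC₄⟩ := hβ.bound (half_pos hα)
  obtain ⟨C₅, hC₅⟩ := Phi_lower hr hβ
  refine ⟨Ur * (Uq * (P₂ + P₁) + P₁ * C₄.toNNReal * P₃ * C₅), fun H t L ht hL h1 h2 => ?_⟩
  set inner : ℝ → ℝ≥0∞ := fun s =>
    LqNorm q (Ioi s) (fun u => ENNReal.ofReal (u ^ (-q⁻¹.toReal)) * H u) with hinner
  have in2 : ∀ s, t ≤ s → inner s ≤ P₁ * (L * ENNReal.ofReal ((s / t) ^ (-α))) := by
    intro s hs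
    have hs0 : 0 < s := ht.trans_le hs
    calc inner s ≤ LqNorm q (Ici s) (fun u => ENNReal.ofReal (u ^ (-q⁻¹.toReal)) * H u) :=
          LqNorm_mono_set Ioi_subset_Ici_self _
      _ ≤ LqNorm q (Ici s) (fun u => (L * ENNReal.ofReal ((s / t) ^ (-α))) *
            (ENNReal.ofReal (u ^ (-q⁻¹.toReal)) * ENNReal.ofReal ((u / s) ^ (-α)))) := by
          refine LqNorm_mono measurableSet_Ici fun u hu => ?_
          have hu0 : 0 < u := hs0.trans_le hu
          rw [mul_left_comm]
          refine mul_le_mul_right ((h2 u (hs.trans hu)).trans (le_of_eq ?_)) _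
          rw [mul_assoc, ← ENNReal.ofReal_mul (by positivity),
            ← Real.mul_rpow (by positivity) (by positivity)]
          congr 3
          field_simp
      _ = (L * ENNReal.ofReal ((s / t) ^ (-α))) * LqNorm q (Ici s) (fun u =>
            (ENNReal.ofReal (u ^ (-q⁻¹.toReal)) * ENNReal.ofReal ((u / s) ^ (-α)))) :=
          LqNorm_const_mul hq _ _ (ENNReal.mul_ne_top hL ENNReal.ofReal_ne_top) _
      _ ≤ (L * ENNReal.ofReal ((s / t) ^ (-α))) * P₁ := mul_le_mul_right (hP₁ s hs0) _
      _ = _ := mul_comm _ _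
  have in1 : ∀ s, 0 < s → inner s ≤ Uq * (P₂ + P₁) * L := by
    intro s hs
    have e1 : LqNorm q (Ioc 0 t) (fun u => ENNReal.ofReal (u ^ (-q⁻¹.toReal)) * H u) ≤ L * P₂ := by
      calc _ ≤ LqNorm q (Ioc 0 t) (fun u => L *
            (ENNReal.ofReal (u ^ (-q⁻¹.toReal)) * ENNReal.ofReal ((u / t) ^ ε))) := by
            refine LqNorm_mono measurableSet_Ioc fun u hu => ?_
            rw [mul_left_comm]
            exact mul_le_mul_right (h1 u hu.1 hu.2) _
        _ = L * LqNorm q (Ioc 0 t) (fun u =>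
            (ENNReal.ofReal (u ^ (-q⁻¹.toReal)) * ENNReal.ofReal ((u / t) ^ ε))) :=
            LqNorm_const_mul hq _ _ hL _
        _ ≤ _ := mul_le_mul_right (hP₂ t ht) _
    have e2 : LqNorm q (Ici t) (fun u => ENNReal.ofReal (u ^ (-q⁻¹.toReal)) * H u) ≤ L * P₁ := by
      calc _ ≤ LqNorm q (Ici t) (fun u => L *
            (ENNReal.ofReal (u ^ (-q⁻¹.toReal)) * ENNReal.ofReal ((u / t) ^ (-α)))) := by
            refine LqNorm_mono measurableSet_Ici fun u hu => ?_
            rw [mul_left_comm]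
            exact mul_le_mul_right (h2 u hu) _
        _ = L * LqNorm q (Ici t) (fun u =>
            (ENNReal.ofReal (u ^ (-q⁻¹.toReal)) * ENNReal.ofReal ((u / t) ^ (-α)))) :=
            LqNorm_const_mul hq _ _ hL _
        _ ≤ _ := mul_le_mul_right (hP₁ t ht) _
    calc inner s ≤ LqNorm q (Ioc 0 t ∪ Ici t)
            (fun u => ENNReal.ofReal (u ^ (-q⁻¹.toReal)) * H u) := by
          refine LqNorm_mono_set (fun u hu => ?_) _
          rcases le_total u t with h | h
          · exact Or.inl ⟨hs.trans hu, h⟩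
          · exact Or.inr h
      _ ≤ Uq * (L * P₂ + L * P₁) := (hUq _ _ _).trans (mul_le_mul_right (add_le_add e1 e2) _)
      _ = _ := by ring
  have o1 : LqNorm r (Ioo 0 t) (fun s => svWgt r β s * inner s)
      ≤ Uq * (P₂ + P₁) * L * Phi r β t := by
    unfold Phi
    rw [← LqNorm_const_mul hr _ _ (ENNReal.mul_ne_top (by finiteness) hL)]
    refine LqNorm_mono measurableSet_Ioo fun s hs => ?_
    rw [mul_comm]
    exact mul_le_mul_left (in1 s hs.1) _
  have o2 : LqNorm r (Ici t) (fun s => svWgt r β s * inner s)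
      ≤ P₁ * L * ENNReal.ofReal (C₄ * β t) * P₃ := by
    calc _ ≤ LqNorm r (Ici t) (fun s => (P₁ * L * ENNReal.ofReal (C₄ * β t)) *
            (ENNReal.ofReal (s ^ (-r⁻¹.toReal)) * ENNReal.ofReal ((s / t) ^ (-(α / 2))))) := by
          refine LqNorm_mono measurableSet_Ici fun s hs => ?_
          have hs0 : 0 < s := ht.trans_le hs
          have hst : 0 < s / t := by positivity
          have bt := hβ.1 t ht
          rw [svWgt_eq _ hs0]
          have h3 : ENNReal.ofReal (β s) ≤ ENNReal.ofReal (C₄ * β t)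
              * ENNReal.ofReal ((s / t) ^ (α / 2)) := by
            rw [← ENNReal.ofReal_mul (by positivity)]
            apply ENNReal.ofReal_le_ofReal
            refine (hC₄ t s ht hs).2.trans (le_of_eq ?_)
            ring
          calc _ ≤ ENNReal.ofReal (s ^ (-r⁻¹.toReal)) * (ENNReal.ofReal (C₄ * β t)
              * ENNReal.ofReal ((s / t) ^ (α / 2)))
              * (P₁ * (L * ENNReal.ofReal ((s / t) ^ (-α)))) :=
                mul_le_mul' (mul_le_mul_right h3 _) (in2 s hs)
            _ = (P₁ * L * ENNReal.ofReal (C₄ * β t)) * (ENNReal.ofReal (s ^ (-r⁻¹.toReal)) *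
              (ENNReal.ofReal ((s / t) ^ (α / 2)) * ENNReal.ofReal ((s / t) ^ (-α)))) := by ring
            _ = _ := by
                rw [← ENNReal.ofReal_mul (by positivity), ← Real.rpow_add hst]
                congr 5
                ring
      _ = (P₁ * L * ENNReal.ofReal (C₄ * β t)) * LqNorm r (Ici t) (fun s =>
            (ENNReal.ofReal (s ^ (-r⁻¹.toReal)) * ENNReal.ofReal ((s / t) ^ (-(α / 2))))) :=
          LqNorm_const_mul hr _ _ (by finiteness) _
      _ ≤ _ := mul_le_mul_right (hP₃ t ht) _
  calc LqNorm r (Ioi 0) (fun s => svWgt r β s * inner s)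
      ≤ LqNorm r (Ioo 0 t ∪ Ici t) (fun s => svWgt r β s * inner s) := by
        refine LqNorm_mono_set (fun u hu => ?_) _
        rcases lt_or_ge u t with h | h
        · exact Or.inl ⟨hu, h⟩
        · exact Or.inr h
    _ ≤ Ur * (Uq * (P₂ + P₁) * L * Phi r β t + P₁ * L * ENNReal.ofReal (C₄ * β t) * P₃) :=
        (hUr _ _ _).trans (mul_le_mul_right (add_le_add o1 o2) _)
    _ ≤ Ur * (Uq * (P₂ + P₁) * L * Phi r β t +
          P₁ * L * (ENNReal.ofReal C₄ * (C₅ * Phi r β t)) * P₃) := by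
        rw [ENNReal.ofReal_mul hC₄p.le]
        gcongr
        exact hC₅ t ht
    _ = _ := by
        push_cast
        change _ = Ur * (Uq * (P₂ + P₁) + P₁ * ENNReal.ofReal C₄ * P₃ * C₅) * (L * Phi r β t)
        ring

lemma normR_eq (N₀ N₁ : E → ℝ≥0∞) (σ : ℝ) (r q : ℝ≥0∞) (b a : ℝ → ℝ) (f : E) :
    normR N₀ N₁ σ r q b a f = LqNorm r (Ioi 0) (fun s => svWgt r (fun s => b s / a s) s *
      LqNorm q (Ioi s) (fun u => ENNReal.ofReal (u ^ (-q⁻¹.toReal)) *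
        (ENNReal.ofReal (u ^ (-σ) * a u) * Kf N₀ N₁ u f))) := by
  unfold normR
  refine LqNorm_congr measurableSet_Ioi fun t ht => ?_
  unfold svWgt
  congr 1
  exact LqNorm_congr measurableSet_Ioi fun u hu => wgt_split (lt_trans ht hu) _

lemma lower_est (A₀ A₁ : QuasiBanach E) {θ₀ : ℝ} {q r : ℝ≥0∞} (hq : 0 < q) (hr : 0 < r)
    {a b : ℝ → ℝ} (ha : LSV a) :
    ∃ C : ℝ≥0, ∀ (f : E) (t : ℝ), 0 < t →
      ENNReal.ofReal (t ^ (-θ₀) * (a t * (Phi r (fun s => b s / a s) t).toReal))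
          * Kf A₀.N A₁.N t f ≤
        C * Kf (normR A₀.N A₁.N θ₀ r q b a) A₁.N
          (t ^ (1 - θ₀) * (a t * (Phi r (fun s => b s / a s) t).toReal)) f := by
  obtain ⟨A, hA1, hAtop, hA⟩ := A₁.quasi
  lift A to ℝ≥0 using hAtop
  obtain ⟨D, hD⟩ := ha.logLip (-θ₀)
  set D' : ℝ≥0 := (Real.exp q⁻¹.toReal).toNNReal * (D * 3) with hD'
  have key : ∀ (g : E) (t : ℝ), 0 < t →
      ENNReal.ofReal (t ^ (-θ₀) * (a t * (Phi r (fun s => b s / a s) t).toReal))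
          * Kf A₀.N A₁.N t g ≤ D' * normR A₀.N A₁.N θ₀ r q b a g := by
    intro g t ht
    have hat := ha.1 t ht
    set H : ℝ → ℝ≥0∞ := fun u => ENNReal.ofReal (u ^ (-θ₀) * a u) * Kf A₀.N A₁.N u g with hH
    have hHL : LogLip (D * 3) H := hD.mul (Kf_logLip _ _ g)
    set inner : ℝ → ℝ≥0∞ := fun s =>
      LqNorm q (Ioi s) (fun u => ENNReal.ofReal (u ^ (-q⁻¹.toReal)) * H u) with hinner
    have h1 : H t ≤ D' * inner t := by
      have h1 := LqNorm_lower hq ht (fun u => (D * 3 : ℝ≥0) * H u) (H t) (by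
        intro u hu
        have hu0 : 0 < u := ht.trans hu.1
        refine hHL t u ht hu0 ?_
        have h1 := Real.log_lt_log ht hu.1
        have h2 := Real.log_lt_log hu0 hu.2
        rw [Real.log_mul (Real.exp_pos _).ne' ht.ne', Real.log_exp] at h2
        rw [abs_le]; constructor <;> linarith)
      have h2 : LqNorm q (Ioo t (Real.exp 1 * t)) (fun u => ENNReal.ofReal (u ^ (-q⁻¹.toReal)) *
          ((D * 3 : ℝ≥0) * H u)) ≤ (D * 3 : ℝ≥0) * inner t := by
        rw [hinner]
        simp only
        rw [← LqNorm_const_mul hq _ _ ENNReal.coe_ne_top]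
        refine le_trans (LqNorm_mono measurableSet_Ioo fun u hu => ?_)
          (LqNorm_mono_set Ioo_subset_Ioi_self _)
        exact (mul_left_comm _ _ _).le
      calc H t
          = ENNReal.ofReal (Real.exp q⁻¹.toReal) *
            (ENNReal.ofReal (Real.exp (-q⁻¹.toReal)) * H t) := by
            rw [← mul_assoc, ← ENNReal.ofReal_mul (Real.exp_pos _).le, ← Real.exp_add]
            simp
        _ ≤ ENNReal.ofReal (Real.exp q⁻¹.toReal) * ((D * 3 : ℝ≥0) * inner t) :=
            mul_le_mul_right (h1.trans h2) _
        _ = _ := by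
            rw [hD', ENNReal.coe_mul ((Real.exp q⁻¹.toReal).toNNReal) (D * 3), mul_assoc]; rfl
    have h2 : inner t * Phi r (fun s => b s / a s) t ≤ normR A₀.N A₁.N θ₀ r q b a g := by
      rw [normR_eq]
      refine (LqNorm_const_mul_le hr _ _ _).trans ?_
      refine le_trans (LqNorm_mono measurableSet_Ioo fun s hs => ?_)
        (LqNorm_mono_set Ioo_subset_Ioi_self _)
      rw [mul_comm]
      refine mul_le_mul_right ?_ _
      exact LqNorm_mono_set (Ioi_subset_Ioi hs.2.le) _
    calc _ = H t * ENNReal.ofReal (Phi r (fun s => b s / a s) t).toReal := by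
          rw [hH]
          simp only
          rw [mul_right_comm, ← ENNReal.ofReal_mul (by positivity), mul_assoc]
      _ ≤ (D' * inner t) * Phi r (fun s => b s / a s) t :=
          mul_le_mul' h1 ENNReal.ofReal_toReal_le
      _ ≤ _ := by
          rw [mul_assoc]
          exact mul_le_mul_right h2 _
  refine ⟨A * (D' + 1), fun f t ht => ?_⟩
  have hA0 : A ≠ 0 := by
    intro h; rw [h] at hA1; simp at hA1
  unfold Kf
  rw [ENNReal.mul_iInf_of_ne (a := ((A * (D' + 1) : ℝ≥0) : ℝ≥0∞))
    (ENNReal.coe_ne_zero.2 (by positivity)) ENNReal.coe_ne_top]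
  refine le_iInf fun g => ?_
  set W := ENNReal.ofReal (t ^ (-θ₀) * (a t * (Phi r (fun s => b s / a s) t).toReal)) with hW
  have hW' : ENNReal.ofReal (t ^ (1 - θ₀) * (a t * (Phi r (fun s => b s / a s) t).toReal))
      = W * ENNReal.ofReal t := by
    have := ha.1 t ht
    rw [hW, ← ENNReal.ofReal_mul (by positivity), sub_eq_neg_add, Real.rpow_add ht, Real.rpow_one]
    congr 1; ring
  rw [hW']
  calc W * Kf A₀.N A₁.N t f
      ≤ W * (A * (Kf A₀.N A₁.N t g + ENNReal.ofReal t * A₁.N (f - g))) :=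
        mul_le_mul_right (Kf_quasi _ _ hA1 ENNReal.coe_ne_top hA t f g) _
    _ = A * (W * Kf A₀.N A₁.N t g + W * ENNReal.ofReal t * A₁.N (f - g)) := by ring
    _ ≤ A * (D' * normR A₀.N A₁.N θ₀ r q b a g + W * ENNReal.ofReal t * A₁.N (f - g)) := 
        mul_le_mul_right (add_le_add (key g t ht) le_rfl) _
    _ ≤ A * ((D' + 1) * normR A₀.N A₁.N θ₀ r q b a g
          + (D' + 1) * (W * ENNReal.ofReal t * A₁.N (f - g))) := 
        mul_le_mul_right (add_le_add (mul_le_mul_left le_self_add _)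
          (le_mul_of_one_le_left zero_le le_add_self)) _
    _ = _ := by push_cast; ring

lemma LSV.pow_le {a : ℝ → ℝ} (ha : LSV a) {p q : ℝ} (h : q < p) : ∃ C : ℝ, 0 < C ∧
    ∀ u t, 0 < u → u ≤ t → u ^ p * a u ≤ C * (u / t) ^ q * (t ^ p * a t) := by
  obtain ⟨C, hC, hb⟩ := ha.bound (sub_pos.2 h)
  refine ⟨C, hC, fun u t hu hut => ?_⟩
  have ht : 0 < t := hu.trans_le hut
  have hx : 0 < u / t := by positivity
  have h1 := (hb u t hu hut).1
  have h2 : (t / u) ^ (p - q) = (u / t) ^ (q - p) := by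
    rw [← inv_div u t, Real.inv_rpow hx.le, ← Real.rpow_neg hx.le, neg_sub]
  have h3 : u ^ p = (u / t) ^ p * t ^ p := by
    rw [← Real.mul_rpow hx.le ht.le, div_mul_cancel₀ _ ht.ne']
  calc u ^ p * a u ≤ u ^ p * (C * (t / u) ^ (p - q) * a t) := by gcongr
    _ = C * ((u / t) ^ (q - p) * (u / t) ^ p) * (t ^ p * a t) := by rw [h2, h3]; ring
    _ = _ := by rw [← Real.rpow_add hx]; simp

lemma LSV.pow_ge {a : ℝ → ℝ} (ha : LSV a) {p q : ℝ} (h : p < q) : ∃ C : ℝ, 0 < C ∧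
    ∀ u t, 0 < t → t ≤ u → u ^ p * a u ≤ C * (u / t) ^ q * (t ^ p * a t) := by
  obtain ⟨C, hC, hb⟩ := ha.bound (sub_pos.2 h)
  refine ⟨C, hC, fun u t ht hut => ?_⟩
  have hu : 0 < u := ht.trans_le hut
  have hx : 0 < u / t := by positivity
  have h1 := (hb t u ht hut).2
  have h3 : u ^ p = (u / t) ^ p * t ^ p := by
    rw [← Real.mul_rpow hx.le ht.le, div_mul_cancel₀ _ ht.ne']
  calc u ^ p * a u ≤ u ^ p * (C * (u / t) ^ (q - p) * a t) := by gcongr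
    _ = C * ((u / t) ^ (q - p) * (u / t) ^ p) * (t ^ p * a t) := by rw [h3]; ring
    _ = _ := by rw [← Real.rpow_add hx]; simp

lemma upper_est (A₀ A₁ : QuasiBanach E) {θ₀ : ℝ} (hθ₀ : 0 < θ₀)
    {q r : ℝ≥0∞} (hq : 0 < q) (hr : 0 < r)
    {a b : ℝ → ℝ} (ha : LSV a) (hb : LSV b) (hfin : Phi r (fun s => b s / a s) 1 ≠ ∞)
    {ε : ℝ} (hε : 0 < ε) (hε' : ε < 1 - θ₀) :
    ∃ C : ℝ≥0, ∀ (f : E) (t : ℝ) (M : ℝ≥0∞), 0 < t → M ≠ ∞ → M ≠ 0 →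
      (∀ u, 0 < u → u ≤ t →
        ENNReal.ofReal (u ^ (-θ₀) * (a u * (Phi r (fun s => b s / a s) u).toReal))
          * Kf A₀.N A₁.N u f ≤ ENNReal.ofReal ((u / t) ^ ε) * M) →
      Kf (normR A₀.N A₁.N θ₀ r q b a) A₁.N
          (t ^ (1 - θ₀) * (a t * (Phi r (fun s => b s / a s) t).toReal)) f ≤ C * M := by
  have hβ : LSV (fun s => b s / a s) := hb.div ha
  obtain ⟨A, hA1, hAtop, hA⟩ := A₁.quasi
  lift A to ℝ≥0 using hAtop
  obtain ⟨R, hR⟩ := Rnorm_le hq hr hβ (half_pos hε) (half_pos hθ₀)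
  set Φ : ℝ → ℝ := fun t => (Phi r (fun s => b s / a s) t).toReal with hΦ
  have hΦl : LSV Φ := Phi_lsv hr hβ hfin
  obtain ⟨C₁, hC₁, k1⟩ := ha.pow_le (p := 1 - θ₀) (q := ε / 2) (by linarith)
  obtain ⟨C₂, hC₂, k2⟩ := hΦl.inv.pow_le (p := ε) (q := ε / 2) (by linarith)
  obtain ⟨C₃, hC₃, k3⟩ := ha.pow_ge (p := -θ₀) (q := -(θ₀ / 2)) (by linarith)
  set D : ℝ≥0 := A * (C₂.toNNReal + C₁.toNNReal * 2) + C₃.toNNReal * 2 with hD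
  refine ⟨R * D + 2, fun f t M ht hM hM0 h => ?_⟩
  have pΦ : ∀ u, 0 < u → 0 < Φ u := hΦl.1
  have pa : ∀ u, 0 < u → 0 < a u := ha.1
  have hat := pa t ht
  have hΦt := pΦ t ht
  set W : ℝ := t ^ (-θ₀) * (a t * Φ t) with hW
  have hWp : 0 < W := by positivity
  have hW0 : ENNReal.ofReal W ≠ 0 := by simpa using hWp
  have hWt : ENNReal.ofReal W ≠ ∞ := ENNReal.ofReal_ne_top
  set κ : ℝ≥0∞ := 2 * M / ENNReal.ofReal W with hκ
  have hκW : ENNReal.ofReal W * κ = 2 * M := ENNReal.mul_div_cancel hW0 hWt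
  have hlt : Kf A₀.N A₁.N t f < κ := by
    have h1 := h t ht le_rfl
    rw [div_self ht.ne', Real.one_rpow, ENNReal.ofReal_one, one_mul] at h1
    by_contra hcon
    push Not at hcon
    have h2 : 2 * M ≤ M := by
      calc 2 * M = ENNReal.ofReal W * κ := hκW.symm
        _ ≤ ENNReal.ofReal W * Kf A₀.N A₁.N t f := mul_le_mul_right hcon _
        _ ≤ M := h1
    rw [two_mul] at h2
    exact absurd h2 (not_le.2 (ENNReal.lt_add_right hM hM0))
  unfold Kf at hlt
  obtain ⟨g, hg⟩ := iInf_lt_iff.1 hlt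
  have hg0 : A₀.N g ≤ κ := le_self_add.trans hg.le
  have hg1 : ENNReal.ofReal t * A₁.N (f - g) ≤ κ := le_add_self.trans hg.le
  have hωt : ENNReal.ofReal (t ^ (-θ₀) * a t) = ENNReal.ofReal W * ENNReal.ofReal (Φ t)⁻¹ := by
    rw [← ENNReal.ofReal_mul hWp.le, hW]
    congr 1
    field_simp
  set L : ℝ≥0∞ := D * (ENNReal.ofReal (Φ t)⁻¹ * M) with hL
  have hLt : L ≠ ∞ := ENNReal.mul_ne_top ENNReal.coe_ne_top
    (ENNReal.mul_ne_top ENNReal.ofReal_ne_top hM)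
  have hLΦ : L * Phi r (fun s => b s / a s) t = D * M := by
    rw [hL, ← ENNReal.ofReal_toReal (Phi_ne_top hr hβ hfin (t := t))]
    change D * (ENNReal.ofReal (Φ t)⁻¹ * M) * ENNReal.ofReal (Φ t) = _
    calc _ = D * M * (ENNReal.ofReal (Φ t)⁻¹ * ENNReal.ofReal (Φ t)) := by ring
      _ = _ := by rw [← ENNReal.ofReal_mul (by positivity), inv_mul_cancel₀ hΦt.ne']; simp
  have hN : normR A₀.N A₁.N θ₀ r q b a g ≤ R * (D * M) := by
    rw [normR_eq, ← hLΦ]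
    refine hR _ t L ht hLt (fun u hu hut => ?_) (fun u hut => ?_)
    · have hx : 0 < u / t := by positivity
      have hau := pa u hu
      have hΦu := pΦ u hu
      have e1 : ENNReal.ofReal (u ^ (-θ₀) * a u) * Kf A₀.N A₁.N u f
          ≤ ENNReal.ofReal C₂ * (ENNReal.ofReal (Φ t)⁻¹ * M) * ENNReal.ofReal ((u / t) ^ (ε / 2)) := by
        have hr1 : (Φ u)⁻¹ * (u / t) ^ ε ≤ C₂ * (Φ t)⁻¹ * (u / t) ^ (ε / 2) := by
          have := k2 u t hu hut
          rw [Real.div_rpow hu.le ht.le]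
          have ht' : 0 < t ^ ε := by positivity
          rw [← mul_div_assoc, div_le_iff₀ ht']
          calc (Φ u)⁻¹ * u ^ ε = u ^ ε * (Φ u)⁻¹ := mul_comm _ _
            _ ≤ _ := this
            _ = _ := by ring
        calc _ = ENNReal.ofReal (Φ u)⁻¹ *
              (ENNReal.ofReal (u ^ (-θ₀) * (a u * Φ u)) * Kf A₀.N A₁.N u f) := by
              rw [← mul_assoc, ← ENNReal.ofReal_mul (by positivity)]
              congr 2
              field_simp
          _ ≤ ENNReal.ofReal (Φ u)⁻¹ * (ENNReal.ofReal ((u / t) ^ ε) * M) :=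
              mul_le_mul_right (h u hu hut) _
          _ = ENNReal.ofReal ((Φ u)⁻¹ * (u / t) ^ ε) * M := by
              rw [← mul_assoc, ← ENNReal.ofReal_mul (by positivity)]
          _ ≤ ENNReal.ofReal (C₂ * (Φ t)⁻¹ * (u / t) ^ (ε / 2)) * M :=
              mul_le_mul_left (ENNReal.ofReal_le_ofReal hr1) _
          _ = _ := by
              rw [ENNReal.ofReal_mul (by positivity), ENNReal.ofReal_mul hC₂.le]; ring
      have e2 : ENNReal.ofReal (u ^ (-θ₀) * a u) * (ENNReal.ofReal u * A₁.N (g - f))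
          ≤ ENNReal.ofReal C₁ * 2 * (ENNReal.ofReal (Φ t)⁻¹ * M)
            * ENNReal.ofReal ((u / t) ^ (ε / 2)) := by
        rw [A₁.sub_comm]
        have z : ∀ s, 0 < s → ENNReal.ofReal (s ^ (-θ₀) * a s) * ENNReal.ofReal s
            = ENNReal.ofReal (s ^ (1 - θ₀) * a s) := by
          intro s hs
          have := pa s hs
          rw [← ENNReal.ofReal_mul (by positivity), sub_eq_neg_add, Real.rpow_add hs, Real.rpow_one]
          congr 1; ring
        calc _ = ENNReal.ofReal (u ^ (1 - θ₀) * a u) * A₁.N (f - g) := by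
              rw [← mul_assoc, z u hu]
          _ ≤ ENNReal.ofReal (C₁ * (u / t) ^ (ε / 2) * (t ^ (1 - θ₀) * a t)) * A₁.N (f - g) :=
              mul_le_mul_left (ENNReal.ofReal_le_ofReal (k1 u t hu hut)) _
          _ = ENNReal.ofReal C₁ * ENNReal.ofReal ((u / t) ^ (ε / 2)) *
                (ENNReal.ofReal W * ENNReal.ofReal (Φ t)⁻¹ *
                (ENNReal.ofReal t * A₁.N (f - g))) := by
              rw [ENNReal.ofReal_mul (by positivity), ENNReal.ofReal_mul hC₁.le, ← z t ht, hωt]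
              ring
          _ ≤ ENNReal.ofReal C₁ * ENNReal.ofReal ((u / t) ^ (ε / 2)) *
                (ENNReal.ofReal W * ENNReal.ofReal (Φ t)⁻¹ * κ) :=
              mul_le_mul_right (mul_le_mul_right hg1 _) _
          _ = ENNReal.ofReal C₁ * ENNReal.ofReal ((u / t) ^ (ε / 2)) *
                (ENNReal.ofReal (Φ t)⁻¹ * (ENNReal.ofReal W * κ)) := by ring
          _ = _ := by rw [hκW]; ring
      calc ENNReal.ofReal (u ^ (-θ₀) * a u) * Kf A₀.N A₁.N u g
          ≤ ENNReal.ofReal (u ^ (-θ₀) * a u) *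
            (A * (Kf A₀.N A₁.N u f + ENNReal.ofReal u * A₁.N (g - f))) :=
            mul_le_mul_right (Kf_quasi _ _ hA1 ENNReal.coe_ne_top hA u g f) _
        _ = A * (ENNReal.ofReal (u ^ (-θ₀) * a u) * Kf A₀.N A₁.N u f +
            ENNReal.ofReal (u ^ (-θ₀) * a u) * (ENNReal.ofReal u * A₁.N (g - f))) := by ring
        _ ≤ _ := mul_le_mul_right (add_le_add e1 e2) _
        _ = ((A * (C₂.toNNReal + C₁.toNNReal * 2) : ℝ≥0) : ℝ≥0∞) *
              ((ENNReal.ofReal (Φ t)⁻¹ * M) * ENNReal.ofReal ((u / t) ^ (ε / 2))) := by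
            push_cast
            simp only [ENNReal.ofReal]
            ring
        _ ≤ (D : ℝ≥0∞) * ((ENNReal.ofReal (Φ t)⁻¹ * M) * ENNReal.ofReal ((u / t) ^ (ε / 2))) :=
            mul_le_mul_left (ENNReal.coe_le_coe.2 le_self_add) _
        _ = _ := by rw [hL]; ring
    · have hu : 0 < u := ht.trans_le hut
      have hx : 0 < u / t := by positivity
      calc ENNReal.ofReal (u ^ (-θ₀) * a u) * Kf A₀.N A₁.N u g
          ≤ ENNReal.ofReal (C₃ * (u / t) ^ (-(θ₀ / 2)) * (t ^ (-θ₀) * a t)) * κ :=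
            mul_le_mul' (ENNReal.ofReal_le_ofReal (k3 u t ht hut))
              ((Kf_le_left _ A₁ u g).trans hg0)
        _ = ENNReal.ofReal C₃ * ENNReal.ofReal ((u / t) ^ (-(θ₀ / 2))) *
              (ENNReal.ofReal (Φ t)⁻¹ * (ENNReal.ofReal W * κ)) := by
            rw [ENNReal.ofReal_mul (by positivity), ENNReal.ofReal_mul hC₃.le, hωt]
            ring
        _ = ((C₃.toNNReal * 2 : ℝ≥0) : ℝ≥0∞) *
              ((ENNReal.ofReal (Φ t)⁻¹ * M) * ENNReal.ofReal ((u / t) ^ (-(θ₀ / 2)))) := by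
            rw [hκW]
            push_cast
            simp only [ENNReal.ofReal]
            ring
        _ ≤ (D : ℝ≥0∞) * ((ENNReal.ofReal (Φ t)⁻¹ * M) * ENNReal.ofReal ((u / t) ^ (-(θ₀ / 2)))) :=
            mul_le_mul_left (ENNReal.coe_le_coe.2 le_add_self) _
        _ = _ := by rw [hL]; ring
  refine (iInf_le _ g).trans ?_
  have hρ : ENNReal.ofReal (t ^ (1 - θ₀) * (a t * Φ t)) = ENNReal.ofReal W * ENNReal.ofReal t := by
    rw [hW, ← ENNReal.ofReal_mul (by positivity), sub_eq_neg_add, Real.rpow_add ht, Real.rpow_one]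
    congr 1; ring
  rw [hρ, mul_assoc]
  calc _ ≤ R * (D * M) + ENNReal.ofReal W * κ := add_le_add hN (mul_le_mul_right hg1 _)
    _ = _ := by rw [hκW]; push_cast; ring

lemma upper_est' (A₀ A₁ : QuasiBanach E) {θ₀ : ℝ} (hθ₀ : 0 < θ₀)
    {q r : ℝ≥0∞} (hq : 0 < q) (hr : 0 < r)
    {a b : ℝ → ℝ} (ha : LSV a) (hb : LSV b) (hfin : Phi r (fun s => b s / a s) 1 ≠ ∞)
    {ε : ℝ} (hε : 0 < ε) (hε' : ε < 1 - θ₀) :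
    ∃ C : ℝ≥0, ∀ (f : E) (t : ℝ) (M : ℝ≥0∞), 0 < t →
      (∀ u, 0 < u → u ≤ t →
        ENNReal.ofReal (u ^ (-θ₀) * (a u * (Phi r (fun s => b s / a s) u).toReal))
          * Kf A₀.N A₁.N u f ≤ ENNReal.ofReal ((u / t) ^ ε) * M) →
      Kf (normR A₀.N A₁.N θ₀ r q b a) A₁.N
          (t ^ (1 - θ₀) * (a t * (Phi r (fun s => b s / a s) t).toReal)) f ≤ C * M := by
  obtain ⟨C, hC⟩ := upper_est A₀ A₁ hθ₀ hq hr ha hb hfin hε hε'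
  refine ⟨C + 1, fun f t M ht h => ?_⟩
  by_cases hM : M = ∞
  · rw [hM, ENNReal.mul_top (by simp)]
    exact le_top
  have hle : (C : ℝ≥0∞) ≤ ((C + 1 : ℝ≥0) : ℝ≥0∞) := ENNReal.coe_le_coe.2 le_self_add
  have hpos : (0 : ℝ≥0) < C + 1 := by positivity
  have hne : ((C + 1 : ℝ≥0) : ℝ≥0∞) ≠ 0 := ENNReal.coe_ne_zero.2 hpos.ne'
  by_cases hM0 : M = 0
  · refine _root_.le_of_forall_pos_le_add fun δ hδ => ?_
    by_cases hδt : δ = ∞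
    · simp [hδt]
    have hδ' : δ / ((C + 1 : ℝ≥0) : ℝ≥0∞) ≠ 0 := by
      simp [ENNReal.div_eq_zero_iff, hδ.ne']
    have := hC f t (δ / ((C + 1 : ℝ≥0) : ℝ≥0∞)) ht
      (ENNReal.div_ne_top hδt hne) hδ' (fun u hu hut => by
        refine (h u hu hut).trans ?_
        rw [hM0]; simp)
    refine this.trans ?_
    rw [hM0, mul_zero, zero_add]
    refine (mul_le_mul_left hle _).trans (le_of_eq ?_)
    exact ENNReal.mul_div_cancel hne ENNReal.coe_ne_top
  · exact (hC f t M ht hM hM0 h).trans (mul_le_mul_left hle _)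

theorem theorem22
    (A₀ A₁ : QuasiBanach E)
    (hne : ∃ x : E, x ≠ 0 ∧ A₀.N x ≠ ∞ ∧ A₁.N x ≠ ∞)
    (θ₀ θ : ℝ) (hθ₀ : 0 < θ₀) (hθ₀' : θ₀ < 1) (hθ : 0 < θ) (hθ' : θ ≤ 1)
    (q₀ r r₀ : ℝ≥0∞) (hq₀ : 0 < q₀) (hr : 0 < r) (hr₀ : 0 < r₀)
    (a a₀ b₀ : ℝ → ℝ)
    (h_sv_a : SlowlyVarying a)
    (h_sv_a₀ : SlowlyVarying a₀)
    (h_sv_b₀ : SlowlyVarying b₀)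
    (hfin : LqNorm r₀ (Ioo 0 1) (svWgt r₀ (fun s => b₀ s / a₀ s)) ≠ ∞)
    (hθ1 : θ = 1 → LqNorm r (Ioo 0 1) (svWgt r (fun s => a s)) ≠ ∞)
    (c₀ ρ : ℝ → ℝ)
    (hc₀ : ∀ t, c₀ t = a₀ t * (LqNorm r₀ (Ioo 0 t) (svWgt r₀ (fun s => b₀ s / a₀ s))).toReal)
    (hρ : ∀ t, ρ t = t ^ (1 - θ₀) * c₀ t) :
    EquivNorms
      (normK (normR A₀.N A₁.N θ₀ r₀ q₀ b₀ a₀) A₁.N θ r a)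
      (normK A₀.N A₁.N ((1 - θ) * θ₀ + θ) r (fun t => c₀ t ^ (1 - θ) * a (ρ t))) := by
  have ha := h_sv_a.lsv
  have ha₀ := h_sv_a₀.lsv
  have hb₀ := h_sv_b₀.lsv
  have hβ : LSV (fun s => b₀ s / a₀ s) := hb₀.div ha₀
  have hc' : ∀ t, a₀ t * (Phi r₀ (fun s => b₀ s / a₀ s) t).toReal = c₀ t := fun t => (hc₀ t).symm
  have hρ' : ∀ t, t ^ (1 - θ₀) * c₀ t = ρ t := fun t => (hρ t).symm
  have hc : LSV c₀ := by
    have := ha₀.mul (Phi_lsv hr₀ hβ hfin)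
    simpa only [hc'] using this
  have haρ : LSV (fun t => a (ρ t)) := by
    have := ha.comp hc (1 - θ₀)
    simpa only [hρ'] using this
  have hα : 0 < 1 - θ₀ := by linarith
  have hρpos : ∀ t, 0 < t → 0 < ρ t := fun t ht => by
    rw [hρ]; exact mul_pos (Real.rpow_pos_of_pos ht _) (hc.1 t ht)
  have hθα : 0 < θ * (1 - θ₀) := mul_pos hθ hα
  set ε : ℝ := θ * (1 - θ₀) / 2 with hε
  set δ : ℝ := θ * (1 - θ₀) / 4 with hδ
  have hεp : 0 < ε := by positivity
  have hδp : 0 < δ := by positivity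
  have hεlt : ε < 1 - θ₀ := by
    have : θ * (1 - θ₀) ≤ 1 * (1 - θ₀) := by gcongr
    rw [hε]; linarith
  obtain ⟨Cl, hlow⟩ := lower_est A₀ A₁ (θ₀ := θ₀) (b := b₀) hq₀ hr₀ ha₀
  obtain ⟨Cu, hup⟩ := upper_est' A₀ A₁ hθ₀ hq₀ hr₀ ha₀ hb₀ hfin hεp hεlt
  simp only [hc', hρ'] at hlow hup
  set NR := normR A₀.N A₁.N θ₀ r₀ q₀ b₀ a₀ with hNR
  -- auxiliary functions
  have hbs : LSV (fun t => c₀ t ^ (1 - θ) * a (ρ t)) := (hc.rpow (1 - θ)).mul haρ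
  have hvs : LSV (fun t => c₀ t ^ (-θ) * a (ρ t)) := (hc.rpow (-θ)).mul haρ
  set v : ℝ → ℝ := fun t => t ^ (-(θ * (1 - θ₀))) * (c₀ t ^ (-θ) * a (ρ t)) with hv
  have hvpos : ∀ t, 0 < t → 0 < v t := fun t ht =>
    mul_pos (Real.rpow_pos_of_pos ht _) (hvs.1 t ht)
  have hvρ : ∀ t, 0 < t → v t = ρ t ^ (-θ) * a (ρ t) := by
    intro t ht
    rw [hρ t, Real.mul_rpow (Real.rpow_nonneg ht.le _) (hc.1 t ht).le, ← Real.rpow_mul ht.le, hv]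
    simp only [hρ t]
    rw [show (1 - θ₀) * -θ = -(θ * (1 - θ₀)) by ring]
    ring
  have hvF : ∀ t, 0 < t → t ^ (-((1 - θ) * θ₀ + θ)) * (c₀ t ^ (1 - θ) * a (ρ t))
      = v t * (t ^ (-θ₀) * c₀ t) := by
    intro t ht
    rw [hv]
    simp only
    rw [show -((1 - θ) * θ₀ + θ) = -(θ * (1 - θ₀)) + -θ₀ by ring, Real.rpow_add ht,
      show 1 - θ = -θ + 1 by ring, Real.rpow_add (hc.1 t ht), Real.rpow_one]
    ring
  set G : E → ℝ → ℝ≥0∞ := fun f u => ENNReal.ofReal (u ^ (-θ) * a u) * Kf NR A₁.N u f with hG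
  set F : E → ℝ → ℝ≥0∞ := fun f u =>
    ENNReal.ofReal (u ^ (-((1 - θ) * θ₀ + θ)) * (c₀ u ^ (1 - θ) * a (ρ u))) * Kf A₀.N A₁.N u f with hF
  set I : E → ℝ → ℝ≥0∞ := fun f u =>
    ENNReal.ofReal (u ^ (-θ₀) * c₀ u) * Kf A₀.N A₁.N u f with hI
  obtain ⟨Da, hDa⟩ := ha.logLip (-θ)
  obtain ⟨Db, hDb⟩ := hbs.logLip (-((1 - θ) * θ₀ + θ))
  obtain ⟨Dc, hDc⟩ := hc.logLip (-θ₀)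
  have hGL : ∀ f, LogLip (Da * 3) (G f) := fun f => hDa.mul (Kf_logLip _ _ f)
  have hFL : ∀ f, LogLip (Db * 3) (F f) := fun f => hDb.mul (Kf_logLip _ _ f)
  have hIL : ∀ f, LogLip (Dc * 3) (I f) := fun f => hDc.mul (Kf_logLip _ _ f)
  have hFI : ∀ f t, 0 < t → F f t = ENNReal.ofReal (v t) * I f t := by
    intro f t ht
    simp only [hF, hI]
    rw [hvF t ht, ENNReal.ofReal_mul (hvpos t ht).le, mul_assoc]
  have hGρ : ∀ f t, 0 < t → G f (ρ t) = ENNReal.ofReal (v t) * Kf NR A₁.N (ρ t) f := by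
    intro f t ht
    simp only [hG]
    rw [hvρ t ht]
  -- discretizations
  obtain ⟨E₁, hE₁⟩ := discretize hr (Da * 3)
  obtain ⟨E₂, hE₂⟩ := discretize hr (Db * 3)
  obtain ⟨B, hB0, hB⟩ := hc.2 ((1 - θ₀) / 2) (by linarith)
  obtain ⟨E₃, hE₃⟩ := change_var hr (Da * 3) hα (B := B)
    (fun k : ℤ => Real.log (ρ (Real.exp k))) (by
      have hl : ∀ k : ℤ, Real.log (ρ (Real.exp k)) = (1 - θ₀) * k + Real.log (c₀ (Real.exp k)) := by
        intro k
        rw [hρ, Real.log_mul (Real.rpow_pos_of_pos (Real.exp_pos _) _).ne'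
          (hc.1 _ (Real.exp_pos _)).ne', Real.log_rpow (Real.exp_pos _), Real.log_exp]
      intro k l
      have h1 := hB (Real.exp k) (Real.exp l) (Real.exp_pos _) (Real.exp_pos _)
      have h2 := hB (Real.exp l) (Real.exp k) (Real.exp_pos _) (Real.exp_pos _)
      rw [Real.log_exp, Real.log_exp] at h1 h2
      rw [abs_sub_comm (l : ℝ)] at h2
      rw [hl, hl, abs_le]
      constructor <;> linarith)
  have hexp : ∀ k : ℤ, Real.exp (Real.log (ρ (Real.exp k))) = ρ (Real.exp k) := fun k =>
    Real.exp_log (hρpos _ (Real.exp_pos _))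
  simp only [hexp] at hE₃
  have hnX : ∀ f, normK NR A₁.N θ r a f
      = LqNorm r (Ioi 0) (fun u => ENNReal.ofReal (u ^ (-r⁻¹.toReal)) * G f u) := fun f =>
    LqNorm_congr measurableSet_Ioi fun u hu => wgt_split hu _
  have hnY : ∀ f, normK A₀.N A₁.N ((1 - θ) * θ₀ + θ) r (fun t => c₀ t ^ (1 - θ) * a (ρ t)) f
      = LqNorm r (Ioi 0) (fun u => ENNReal.ofReal (u ^ (-r⁻¹.toReal)) * F f u) := fun f =>
    LqNorm_congr measurableSet_Ioi fun u hu => wgt_split hu _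
  -- lower direction
  have hYX : ∀ f, normK A₀.N A₁.N ((1 - θ) * θ₀ + θ) r (fun t => c₀ t ^ (1 - θ) * a (ρ t)) f
      ≤ ((E₂ * Cl * E₃ * E₁ : ℝ≥0) : ℝ≥0∞) * normK NR A₁.N θ r a f := by
    intro f
    rw [hnX, hnY]
    calc _ ≤ E₂ * lr r (fun k => F f (Real.exp k)) := (hE₂ _ (hFL f)).1
      _ ≤ E₂ * lr r (fun k => Cl * G f (ρ (Real.exp k))) := by
          refine mul_le_mul_right (lr_mono fun k => ?_) _
          rw [hFI f _ (Real.exp_pos _), hGρ f _ (Real.exp_pos _),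
            mul_left_comm (Cl : ℝ≥0∞)]
          exact mul_le_mul_right (hlow f _ (Real.exp_pos _)) _
      _ = E₂ * (Cl * lr r (fun k => G f (ρ (Real.exp k)))) := by rw [lr_const_mul hr]
      _ ≤ E₂ * (Cl * (E₃ * (E₁ * LqNorm r (Ioi 0)
            (fun u => ENNReal.ofReal (u ^ (-r⁻¹.toReal)) * G f u)))) :=
          mul_le_mul_right (mul_le_mul_right ((hE₃ _ (hGL f)).1.trans
            (mul_le_mul_right (hE₁ _ (hGL f)).2 _)) _) _
      _ = _ := by push_cast; ring
  -- upper direction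
  obtain ⟨Cv, hCvp, hCv⟩ := hvs.pow_ge (p := -(θ * (1 - θ₀))) (q := -(ε + δ))
    (by rw [hε, hδ]; linarith)
  obtain ⟨Cs, hCs⟩ := lr_shift_sup hr hδp
  have hkey : ∀ f (k : ℤ), G f (ρ (Real.exp k)) ≤
      ((Cu * (Dc * 3 * (Real.exp ε).toNNReal) * Cv.toNNReal : ℝ≥0) : ℝ≥0∞) *
      ⨆ m : ℕ, ENNReal.ofReal (Real.exp (-δ * m)) * F f (Real.exp ((k - m : ℤ) : ℝ)) := by
    intro f k
    set M : ℝ≥0∞ := ⨆ m : ℕ, ENNReal.ofReal (Real.exp (ε * m)) *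
      I f (Real.exp ((k - m : ℤ) : ℝ)) with hM
    have h1 : Kf NR A₁.N (ρ (Real.exp k)) f
        ≤ Cu * (((Dc * 3 * (Real.exp ε).toNNReal : ℝ≥0) : ℝ≥0∞) * M) := by
      refine hup f _ _ (Real.exp_pos _) fun u hu huk => ?_
      have hlu : Real.log u ≤ k := by
        rw [← Real.log_exp (k : ℝ)]; exact Real.log_le_log hu huk
      set m : ℕ := ⌊(k : ℝ) - Real.log u⌋₊ with hm
      have hm1 : (m : ℝ) ≤ k - Real.log u := Nat.floor_le (by linarith)
      have hm2 : (k : ℝ) - Real.log u < m + 1 := Nat.lt_floor_add_one _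
      have hpow : (u / Real.exp k) ^ ε = Real.exp (ε * (Real.log u - k)) := by
        rw [Real.rpow_def_of_pos (by positivity), Real.log_div hu.ne' (Real.exp_pos _).ne',
          Real.log_exp, mul_comm]
      have hone : (1 : ℝ≥0∞) ≤ ENNReal.ofReal ((u / Real.exp k) ^ ε) *
          (ENNReal.ofReal (Real.exp ε) * ENNReal.ofReal (Real.exp (ε * m))) := by
        rw [hpow, ← ENNReal.ofReal_mul (Real.exp_pos _).le, ← ENNReal.ofReal_mul (Real.exp_pos _).le,
          ← Real.exp_add, ← Real.exp_add, ENNReal.one_le_ofReal]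
        apply Real.one_le_exp
        have : 0 ≤ ε * (Real.log u - k + (1 + m)) := mul_nonneg hεp.le (by linarith)
        linarith
      have hMm : ENNReal.ofReal (Real.exp (ε * m)) * I f (Real.exp ((k - m : ℤ) : ℝ)) ≤ M :=
        le_iSup (fun m : ℕ => ENNReal.ofReal (Real.exp (ε * m)) *
          I f (Real.exp ((k - m : ℤ) : ℝ))) m
      calc I f u ≤ ((Dc * 3 : ℝ≥0) : ℝ≥0∞) * I f (Real.exp ((k - m : ℤ) : ℝ)) := by
            refine hIL f u _ hu (Real.exp_pos _) ?_
            rw [Real.log_exp, abs_le]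
            push_cast
            constructor <;> linarith
        _ ≤ ((Dc * 3 : ℝ≥0) : ℝ≥0∞) * (ENNReal.ofReal ((u / Real.exp k) ^ ε) *
            (ENNReal.ofReal (Real.exp ε) * ENNReal.ofReal (Real.exp (ε * m))) *
            I f (Real.exp ((k - m : ℤ) : ℝ))) :=
            mul_le_mul_right (le_mul_of_one_le_left zero_le hone) _
        _ = ENNReal.ofReal ((u / Real.exp k) ^ ε) * (((Dc * 3 : ℝ≥0) : ℝ≥0∞) *
            ENNReal.ofReal (Real.exp ε) * (ENNReal.ofReal (Real.exp (ε * m)) *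
            I f (Real.exp ((k - m : ℤ) : ℝ)))) := by ring
        _ ≤ ENNReal.ofReal ((u / Real.exp k) ^ ε) * (((Dc * 3 : ℝ≥0) : ℝ≥0∞) *
            ENNReal.ofReal (Real.exp ε) * M) :=
            mul_le_mul_right (mul_le_mul_right hMm _) _
        _ = _ := by
            rw [ENNReal.coe_mul (Dc * 3) (Real.exp ε).toNNReal]; rfl
    have h2 : ENNReal.ofReal (v (Real.exp k)) * M ≤ ENNReal.ofReal Cv *
        ⨆ m : ℕ, ENNReal.ofReal (Real.exp (-δ * m)) * F f (Real.exp ((k - m : ℤ) : ℝ)) := by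
      rw [hM, ENNReal.mul_iSup, ENNReal.mul_iSup]
      refine iSup_mono fun m => ?_
      rw [hFI f _ (Real.exp_pos _)]
      generalize I f (Real.exp ((k - m : ℤ) : ℝ)) = J
      rw [← mul_assoc, ← mul_assoc, ← mul_assoc]
      refine mul_le_mul_left ?_ _
      rw [← ENNReal.ofReal_mul (hvpos _ (Real.exp_pos _)).le, ← ENNReal.ofReal_mul hCvp.le,
        ← ENNReal.ofReal_mul (by positivity)]
      apply ENNReal.ofReal_le_ofReal
      have h3 := hCv (Real.exp k) (Real.exp ((k - m : ℤ) : ℝ)) (Real.exp_pos _)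
        (Real.exp_le_exp.2 (by push_cast; linarith [Nat.cast_nonneg (α := ℝ) m]))
      rw [← Real.exp_sub, ← Real.exp_mul ((k : ℝ) - ((k - m : ℤ) : ℝ))] at h3
      calc v (Real.exp k) * Real.exp (ε * m)
          ≤ (Cv * Real.exp (((k : ℝ) - ((k - m : ℤ) : ℝ)) * -(ε + δ))
            * v (Real.exp ((k - m : ℤ) : ℝ))) * Real.exp (ε * m) :=
            mul_le_mul_of_nonneg_right h3 (Real.exp_pos _).le
        _ = Cv * (Real.exp (((k : ℝ) - ((k - m : ℤ) : ℝ)) * -(ε + δ)) * Real.exp (ε * m))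
            * v (Real.exp ((k - m : ℤ) : ℝ)) := by ring
        _ = _ := by
            rw [← Real.exp_add]
            congr 3
            push_cast
            ring
    rw [hGρ f _ (Real.exp_pos _)]
    calc _ ≤ ENNReal.ofReal (v (Real.exp k)) *
          (Cu * (((Dc * 3 * (Real.exp ε).toNNReal : ℝ≥0) : ℝ≥0∞) * M)) := mul_le_mul_right h1 _
      _ = ((Cu * (Dc * 3 * (Real.exp ε).toNNReal) : ℝ≥0) : ℝ≥0∞) *
          (ENNReal.ofReal (v (Real.exp k)) * M) := by
          rw [ENNReal.coe_mul Cu]; ring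
      _ ≤ _ := mul_le_mul_right h2 _
      _ = _ := by
          rw [ENNReal.coe_mul _ Cv.toNNReal]
          exact (mul_assoc _ _ _).symm
  set Ck : ℝ≥0 := Cu * (Dc * 3 * (Real.exp ε).toNNReal) * Cv.toNNReal with hCk
  have hXY : ∀ f, normK NR A₁.N θ r a f ≤ ((E₁ * E₃ * Ck * Cs * E₂ : ℝ≥0) : ℝ≥0∞) *
      normK A₀.N A₁.N ((1 - θ) * θ₀ + θ) r (fun t => c₀ t ^ (1 - θ) * a (ρ t)) f := by
    intro f
    rw [hnX, hnY]
    calc _ ≤ E₁ * lr r (fun k => G f (Real.exp k)) := (hE₁ _ (hGL f)).1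
      _ ≤ E₁ * (E₃ * lr r (fun k => G f (ρ (Real.exp k)))) :=
          mul_le_mul_right (hE₃ _ (hGL f)).2 _
      _ ≤ E₁ * (E₃ * (Ck * lr r (fun k => ⨆ m : ℕ, ENNReal.ofReal (Real.exp (-δ * m)) *
            F f (Real.exp ((k - m : ℤ) : ℝ))))) := by
          rw [← lr_const_mul hr (Ck : ℝ≥0∞)]
          exact mul_le_mul_right (mul_le_mul_right (lr_mono fun k => hkey f k) _) _
      _ ≤ E₁ * (E₃ * (Ck * (Cs * (E₂ * LqNorm r (Ioi 0)
            (fun u => ENNReal.ofReal (u ^ (-r⁻¹.toReal)) * F f u))))) :=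
          mul_le_mul_right (mul_le_mul_right (mul_le_mul_right
            ((hCs (fun k => F f (Real.exp k))).trans
              (mul_le_mul_right (hE₂ _ (hFL f)).2 _)) _) _) _
      _ = _ := by push_cast; ring
  set C₁ : ℝ≥0 := E₂ * Cl * E₃ * E₁ with hC₁
  set C₂ : ℝ≥0 := E₁ * E₃ * Ck * Cs * E₂ with hC₂
  have hpos : (0 : ℝ≥0) < C₁ + C₂ + 1 := by positivity
  refine ⟨((C₁ + C₂ + 1 : ℝ≥0) : ℝ≥0∞), ENNReal.coe_pos.2 hpos, ENNReal.coe_ne_top,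
    fun f => ⟨?_, ?_⟩⟩
  · refine (mul_le_mul_right ((hYX f).trans (mul_le_mul_left (ENNReal.coe_le_coe.2
      (show C₁ ≤ C₁ + C₂ + 1 from (le_self_add.trans le_self_add))) _)) _).trans (le_of_eq ?_)
    rw [← mul_assoc, ENNReal.inv_mul_cancel (ENNReal.coe_ne_zero.2 hpos.ne') ENNReal.coe_ne_top,
      one_mul]
  · exact (hXY f).trans (mul_le_mul_left (ENNReal.coe_le_coe.2
      (show C₂ ≤ C₁ + C₂ + 1 from (le_add_self.trans le_self_add))) _)

end
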